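/- Let m ≥ 0 be an integer. For every G ∈ A²_{(2m−1/2,2m−1/2)}(Π⁺×Π⁺) there exists F ∈ H²(T_Σ) such that (□^m F)(z₁, z₂, 0) = G(z₁,z₂) for all (z₁,z₂) ∈ Π⁺×Π⁺, and moreover ‖F‖²_{H²(T_Σ)} = c_m ‖G‖²_{A²_{(2m−1/2,2m−1/2)}(Π⁺×Π⁺)} for a constant c_m > 0 depending only on m. -/

import Mathlib

open MeasureTheory Set
open scoped ENNReal NNReal

noncomputable section

/-- The spherical cone `Σ = {y ∈ ℝ³ : y₁y₂ − y₃² > 0, y₁ > 0}`. -/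
def Sigma3 : Set (Fin 3 → ℝ) :=
  {y | 0 < y 0 * y 1 - (y 2) ^ 2 ∧ 0 < y 0}

/-- The tube domain `T_Σ = ℝ³ + iΣ ⊂ ℂ³`. -/
def TSigma : Set (Fin 3 → ℂ) :=
  {z | (fun i => (z i).im) ∈ Sigma3}

/-- Square of the Hardy space `H²(T_Σ)` norm. -/
def hardyNormSqSigma (F : (Fin 3 → ℂ) → ℂ) : ℝ≥0∞ :=
  ⨆ y ∈ Sigma3,
    ∫⁻ x : Fin 3 → ℝ, (‖F (fun i => (x i : ℂ) + (y i : ℂ) * Complex.I)‖₊ : ℝ≥0∞) ^ 2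

/-- Partial derivative in the `i`-th complex coordinate. -/
def pd (i : Fin 3) (F : (Fin 3 → ℂ) → ℂ) : (Fin 3 → ℂ) → ℂ :=
  fun z => fderiv ℂ F z (Pi.single i 1)

/-- The box operator `□ = −4 ∂²/∂z₁∂z₂ + ∂²/∂z₃²` associated to the spherical cone. -/
def BoxS (F : (Fin 3 → ℂ) → ℂ) : (Fin 3 → ℂ) → ℂ :=
  fun z => -4 * pd 0 (pd 1 F) z + pd 2 (pd 2 F) z

/-- The upper half-plane `Π⁺`. -/
def UHP : Set ℂ := {z : ℂ | 0 < z.im}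

/-- The weighted measure `dV_α(x+iy) = y^α dx dy` on the upper half-plane. -/
def Vm (α : ℝ) : Measure ℂ :=
  (volume.restrict UHP).withDensity fun z => ENNReal.ofReal (z.im ^ α)

/-- Square of the weighted Bergman space `A²_{(α₁,α₂)}(Π⁺×Π⁺)` norm:
`‖G‖² = ∫_{Π⁺×Π⁺} |G(x₁+iy₁,x₂+iy₂)|² y₁^{α₁} y₂^{α₂} dx₁dx₂dy₁dy₂`. -/
def bergNormSqProd (α₁ α₂ : ℝ) (G : ℂ × ℂ → ℂ) : ℝ≥0∞ :=
  ∫⁻ z, (‖G z‖₊ : ℝ≥0∞) ^ 2 ∂((Vm α₁).prod (Vm α₂))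

/-! Functions in `H²(T_Σ)` arise as Fourier–Laplace transforms `F z = ∫ f t exp(i ⟨t, z⟩) dt` of
functions `f ∈ L²` of the dual cone `{4 t₁ t₂ > t₃², t₁ > 0}`, and `‖F‖² = (2π)³ ‖f‖²` by
Plancherel and Fatou's lemma. On the spectral side `□` is multiplication by
`4 t₁ t₂ - t₃²`, so `(□^m F)(p₁, p₂, 0) = ⟪e p, f⟫` for the explicit vectors
`e p = (4 t₁ t₂ - t₃²)^m conj (exp(i (t₁ p₁ + t₂ p₂)))`. Integrating out `t₃`, the Gram matrix of
the `e p` is a product of two Gamma integrals, which is a constant multiple of the Bergman kernel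
of `A²_{(2m-1/2, 2m-1/2)}`. Since Bergman kernels reproduce and hence are total, matching the two
Gram matrices gives a multiple of an isometry from the Bergman space into `L²` of the dual cone,
and the image `f` of `G` satisfies `⟪e p, f⟫ = G p`. -/

section GramMatrix

variable {𝕜 ι H A : Type*} [RCLike 𝕜] [NormedAddCommGroup H] [InnerProductSpace 𝕜 H]
  [NormedAddCommGroup A] [InnerProductSpace 𝕜 A] {e : ι → H} {k : ι → A}

theorem inner_linearCombination_eq_of_gram_eq
    (hgram : ∀ p q, inner 𝕜 (e p) (e q) = inner 𝕜 (k p) (k q)) (a b : ι →₀ 𝕜) :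
    inner 𝕜 (Finsupp.linearCombination 𝕜 e a) (Finsupp.linearCombination 𝕜 e b) =
      inner 𝕜 (Finsupp.linearCombination 𝕜 k a) (Finsupp.linearCombination 𝕜 k b) := by
  simp only [Finsupp.linearCombination_apply, Finsupp.sum_inner, Finsupp.inner_sum,
    inner_smul_left, inner_smul_right, hgram]

theorem exists_inner_eq_of_gram_eq [CompleteSpace H]
    (hgram : ∀ p q, inner 𝕜 (e p) (e q) = inner 𝕜 (k p) (k q))
    {x : A} (hx : x ∈ (Submodule.span 𝕜 (range k)).topologicalClosure) :
    ∃ y : H, ‖y‖ = ‖x‖ ∧ ∀ p, inner 𝕜 (e p) y = inner 𝕜 (k p) x := by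
  set V := (Submodule.span 𝕜 (range k)).topologicalClosure
  let E := Finsupp.linearCombination 𝕜 e
  let K : (ι →₀ 𝕜) →ₗ[𝕜] V := (Finsupp.linearCombination 𝕜 k).codRestrict V fun a =>
    Submodule.le_topologicalClosure _
      (Finsupp.range_linearCombination (R := 𝕜) (v := k) ▸ LinearMap.mem_range_self _ a)
  have hnorm (a : ι →₀ 𝕜) : ‖E a‖ = ‖K a‖ := by
    rw [Submodule.coe_norm, @norm_eq_sqrt_re_inner 𝕜, @norm_eq_sqrt_re_inner 𝕜 A]
    exact congrArg (fun c : 𝕜 => √(RCLike.re c)) (inner_linearCombination_eq_of_gram_eq hgram a a)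
  have hdense : DenseRange K := by
    refine Subtype.dense_iff.2 fun v hv => ?_
    rw [← range_comp]
    change v ∈ closure (range (Finsupp.linearCombination 𝕜 k))
    rwa [← LinearMap.coe_range, Finsupp.range_linearCombination]
  have hT (a : ι →₀ 𝕜) : E.extendOfNorm K (K a) = E a :=
    LinearMap.extendOfNorm_eq hdense ⟨1, fun a => by rw [one_mul, hnorm]⟩ a
  refine ⟨E.extendOfNorm K ⟨x, hx⟩, ?_, fun p => ?_⟩
  · refine hdense.induction_on (p := fun v : V => ‖E.extendOfNorm K v‖ = ‖v‖) ⟨x, hx⟩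
      (isClosed_eq (by fun_prop) (by fun_prop)) fun a => ?_
    rw [hT, hnorm]
  · refine hdense.induction_on
      (p := fun v : V => inner 𝕜 (e p) (E.extendOfNorm K v) = inner 𝕜 (k p) (v : A)) ⟨x, hx⟩
      (isClosed_eq (by fun_prop) (by fun_prop)) fun a => ?_
    rw [hT]
    simpa [E, K] using inner_linearCombination_eq_of_gram_eq hgram (Finsupp.single p 1) a

theorem exists_inner_eq_of_gram_eq_const_mul [CompleteSpace H] {κ : ℝ} (hκ : 0 < κ)
    (hgram : ∀ p q, inner 𝕜 (e p) (e q) = κ * inner 𝕜 (k p) (k q))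
    {x : A} (hx : x ∈ (Submodule.span 𝕜 (range k)).topologicalClosure) :
    ∃ y : H, ‖y‖ ^ 2 = κ⁻¹ * ‖x‖ ^ 2 ∧ ∀ p, inner 𝕜 (e p) y = inner 𝕜 (k p) x := by
  set s : ℝ := (√κ)⁻¹
  have hs : s * s = κ⁻¹ := by rw [← mul_inv, Real.mul_self_sqrt hκ.le]
  obtain ⟨y, hnorm, hinner⟩ := exists_inner_eq_of_gram_eq (e := fun p => (s : 𝕜) • e p)
    (fun p q => by
      rw [inner_smul_left, inner_smul_right, hgram, RCLike.conj_ofReal, ← mul_assoc, ← mul_assoc,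
        ← RCLike.ofReal_mul, ← RCLike.ofReal_mul, hs, inv_mul_cancel₀ hκ.ne', RCLike.ofReal_one,
        one_mul]) hx
  refine ⟨(s : 𝕜) • y, ?_, fun p => ?_⟩
  · rw [norm_smul, mul_pow, hnorm, RCLike.norm_ofReal, sq_abs, sq s, hs]
  · rw [← hinner, inner_smul_left, inner_smul_right, RCLike.conj_ofReal]

end GramMatrix

section Plancherel

open FourierTransform SchwartzMap
open scoped ContDiff

variable {E F : Type*} [NormedAddCommGroup E] [InnerProductSpace ℝ E] [FiniteDimensional ℝ E]
  [MeasurableSpace E] [BorelSpace E] [NormedAddCommGroup F] [InnerProductSpace ℂ F]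
  [CompleteSpace F] {f : E → F}

theorem coeFn_fourier_toLp_ae_eq (h1 : Integrable f) (h2 : MemLp f 2) :
    (𝓕 (h2.toLp f) : Lp F 2 (volume : Measure E)) =ᵐ[volume] 𝓕 f := by
  have hcont : Continuous (𝓕 f) :=
    VectorFourier.fourierIntegral_continuous Real.continuous_fourierChar
      (innerSL ℝ).continuous₂ h1
  refine ae_eq_of_integral_contDiff_smul_eq ((Lp.memLp _).locallyIntegrable (by norm_num))
    hcont.locallyIntegrable fun φ hφ hφc => ?_
  have hφc' : HasCompactSupport (Complex.ofRealCLM ∘ φ) := hφc.comp_left rfl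
  have hφ' : ContDiff ℝ ∞ (Complex.ofRealCLM ∘ φ) := by fun_prop
  set Φ : 𝓢(E, ℂ) := hφc'.toSchwartzMap hφ'
  have hΦ (u : E → F) (x : E) : φ x • u x = Φ x • u x := (Complex.coe_smul (φ x) (u x)).symm
  simp only [hΦ]
  calc ∫ x, Φ x • (𝓕 (h2.toLp f) : Lp F 2 (volume : Measure E)) x
    _ = ∫ x, 𝓕 Φ x • h2.toLp f x := by
      rw [← Lp.toTemperedDistribution_apply, ← Lp.fourier_toTemperedDistribution_eq,
        TemperedDistribution.fourier_apply, Lp.toTemperedDistribution_apply]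
    _ = ∫ x, 𝓕 (Φ : E → ℂ) x • f x := by
      refine integral_congr_ae ?_
      filter_upwards [h2.coeFn_toLp] with x hx
      rw [hx, SchwartzMap.fourier_coe]
    _ = ∫ x, Φ x • 𝓕 f x := by
      have := VectorFourier.integral_fourierIntegral_smul_eq_flip (L := innerₗ E)
        Real.continuous_fourierChar continuous_inner (Φ.integrable (μ := volume)) h1
      rwa [flip_innerₗ] at this

theorem eLpNorm_fourier_eq (h1 : Integrable f) (h2 : MemLp f 2) :
    eLpNorm (𝓕 f) 2 volume = eLpNorm f 2 volume := by
  rw [← eLpNorm_congr_ae (coeFn_fourier_toLp_ae_eq h1 h2), ← eLpNorm_congr_ae h2.coeFn_toLp,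
    ← ENNReal.toReal_eq_toReal_iff' (Lp.eLpNorm_ne_top _) (Lp.eLpNorm_ne_top _)]
  exact Lp.norm_fourier_eq (h2.toLp f)

end Plancherel

section Reproducing

variable {𝕜 X : Type*} [RCLike 𝕜] [MeasurableSpace X] {μ : Measure X} {S : Set X}

/-- The subspace of those `h ∈ L²(μ)` that are reproduced by the family `k` of square integrable
functions, that is `h x = ⟪k x, h⟫` for almost every `x ∈ S`. -/
def reproducedSubmodule (k : S → Lp 𝕜 2 μ) : Submodule 𝕜 (Lp 𝕜 2 μ) where
  carrier := {h | ∀ᵐ x ∂μ, ∀ hx : x ∈ S, inner 𝕜 (k ⟨x, hx⟩) h = h x}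
  add_mem' {u v} hu hv := by
    filter_upwards [hu, hv, Lp.coeFn_add u v] with x hux hvx huv hx
    rw [inner_add_right, hux hx, hvx hx, huv, Pi.add_apply]
  zero_mem' := by
    filter_upwards [Lp.coeFn_zero 𝕜 2 μ] with x hx _
    rw [hx, inner_zero_right, Pi.zero_apply]
  smul_mem' c u hu := by
    filter_upwards [hu, Lp.coeFn_smul c u] with x hux hcu hx
    rw [inner_smul_right, hux hx, hcu, Pi.smul_apply, smul_eq_mul]

variable {k : S → Lp 𝕜 2 μ}

theorem isClosed_reproducedSubmodule : IsClosed (reproducedSubmodule k : Set (Lp 𝕜 2 μ)) := by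
  refine isClosed_of_closure_subset fun h hh => ?_
  obtain ⟨u, hu, hlim⟩ := mem_closure_iff_seq_limit.1 hh
  obtain ⟨ns, hns, hae⟩ := (tendstoInMeasure_of_tendsto_Lp hlim).exists_seq_tendsto_ae
  filter_upwards [hae, ae_all_iff.2 hu] with x hx hux hxS
  refine tendsto_nhds_unique ?_ hx
  simp only [← hux _ hxS]
  exact tendsto_const_nhds.inner (hlim.comp hns.tendsto_atTop)

theorem reproducedSubmodule_le_topologicalClosure_span (hS : ∀ᵐ x ∂μ, x ∈ S)
    (hk : ∀ q, k q ∈ reproducedSubmodule k) :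
    reproducedSubmodule k ≤ (Submodule.span 𝕜 (range k)).topologicalClosure := by
  intro h hh
  set V := (Submodule.span 𝕜 (range k)).topologicalClosure
  have : CompleteSpace V := (Submodule.isClosed_topologicalClosure _).completeSpace_coe
  have hV : V ≤ reproducedSubmodule k :=
    Submodule.topologicalClosure_minimal _ (Submodule.span_le.2 (range_subset_iff.2 hk))
      isClosed_reproducedSubmodule
  have hP : V.starProjection h ∈ V := Submodule.starProjection_apply_mem V h
  have hinner (q : S) : inner 𝕜 (k q) (h - V.starProjection h) = 0 :=
    (Submodule.mem_orthogonal V _).1 (Submodule.sub_starProjection_mem_orthogonal h) _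
      (Submodule.le_topologicalClosure _ (Submodule.subset_span ⟨q, rfl⟩))
  suffices h - V.starProjection h = 0 by rwa [sub_eq_zero.1 this]
  refine Lp.ext ?_
  filter_upwards [hS, sub_mem hh (hV hP), Lp.coeFn_zero 𝕜 2 μ] with x hxS hx hzero
  rw [← hx hxS, hinner, hzero, Pi.zero_apply]

end Reproducing

theorem inner_toLp_toLp {𝕜 X : Type*} [RCLike 𝕜] [MeasurableSpace X] {μ : Measure X} {f g : X → 𝕜}
    (hf : MemLp f 2 μ) (hg : MemLp g 2 μ) :
    inner 𝕜 (hf.toLp f) (hg.toLp g) = ∫ x, g x * (starRingEnd 𝕜) (f x) ∂μ := by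
  rw [L2.inner_def]
  refine integral_congr_ae ?_
  filter_upwards [hf.coeFn_toLp, hg.coeFn_toLp] with x hfx hgx
  rw [hfx, hgx, RCLike.inner_apply]

section Disk

open Metric Real

section CircleAverage

variable {E : Type*} [NormedAddCommGroup E] [NormedSpace ℝ E]

theorem integrableOn_comp_polarCoord_symm {f : ℂ → E} (hf : Integrable f) :
    IntegrableOn (fun p : ℝ × ℝ => p.1 • f (Complex.polarCoord.symm p)) polarCoord.target := by
  have hf' : Integrable (fun p : ℝ × ℝ => f (Complex.measurableEquivRealProd.symm p)) :=
    Complex.volume_preserving_equiv_real_prod.symm.integrable_comp_of_integrable hf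
  have := (integrableOn_image_iff_integrableOn_abs_det_fderiv_smul volume
    polarCoord.open_target.measurableSet
    (fun p _ => (hasFDerivAt_polarCoord_symm p).hasFDerivWithinAt)
    polarCoord.symm.injOn _).1 hf'.integrableOn
  refine this.congr_fun (fun p hp => ?_) polarCoord.open_target.measurableSet
  have hp : 0 < p.1 := hp.1
  simp only [det_fderivPolarCoordSymm, abs_of_pos hp,
    Complex.measurableEquivRealProd_symm_polarCoord_symm_apply]

theorem integral_eq_integral_Ioi_smul_circleAverage {f : ℂ → E} (hf : Integrable f) :
    ∫ z, f z = ∫ r in Ioi (0 : ℝ), (2 * π * r) • circleAverage f 0 r := by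
  rw [← Complex.integral_comp_polarCoord_symm, polarCoord_target, Measure.volume_eq_prod,
    setIntegral_prod _ (integrableOn_comp_polarCoord_symm hf)]
  refine integral_congr_ae (Filter.Eventually.of_forall fun r => ?_)
  have hcircle (θ : ℝ) : Complex.polarCoord.symm (r, θ) = circleMap 0 r θ := by
    simp [circleMap, Complex.exp_mul_I]
  simp only [hcircle]
  rw [circleAverage_eq_integral_add (-π), intervalIntegral.integral_comp_add_right
    (fun θ => f (circleMap 0 r θ)), intervalIntegral.integral_of_le (by linarith [pi_pos]),
    integral_Ioc_eq_integral_Ioo, smul_smul, mul_right_comm, mul_inv_cancel₀ two_pi_pos.ne',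
    one_mul, ← integral_smul]
  rw [zero_add, two_mul, add_neg_cancel_right]

theorem setIntegral_ball_norm_smul_eq {F : Type*} [NormedAddCommGroup F] [NormedSpace ℂ F]
    [CompleteSpace F] {w : ℝ → ℝ} {h : ℂ → F} {R : ℝ} (hh : DifferentiableOn ℂ h (ball 0 R))
    (hw : IntegrableOn (fun ζ : ℂ => w ‖ζ‖) (ball 0 R))
    (hwh : IntegrableOn (fun ζ : ℂ => w ‖ζ‖ • h ζ) (ball 0 R)) :
    ∫ ζ in ball 0 R, w ‖ζ‖ • h ζ = (∫ ζ : ℂ in ball 0 R, w ‖ζ‖) • h 0 := by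
  rw [← integral_smul_const, ← integral_indicator measurableSet_ball,
    ← integral_indicator measurableSet_ball,
    integral_eq_integral_Ioi_smul_circleAverage (hwh.integrable_indicator measurableSet_ball),
    integral_eq_integral_Ioi_smul_circleAverage
      (IntegrableOn.integrable_indicator (hw.smul_const (h 0)) measurableSet_ball)]
  refine setIntegral_congr_fun measurableSet_Ioi fun r hr => ?_
  have hnorm {ζ : ℂ} (hζ : ζ ∈ sphere (0 : ℂ) |r|) : ‖ζ‖ = r := by
    rw [mem_sphere_zero_iff_norm.1 hζ, abs_of_pos hr]
  have hind (u : ℂ → F) : circleAverage ((ball (0 : ℂ) R).indicator fun ζ => w ‖ζ‖ • u ζ) 0 r =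
      (Iio R).indicator w r • circleAverage u 0 r := by
    rw [← circleAverage_fun_smul]
    refine circleAverage_congr_sphere fun ζ hζ => ?_
    by_cases hrR : r < R <;> simp [indicator, hnorm hζ, hrR]
  simp only [hind]
  by_cases hrR : r < R
  · have hball : closedBall (0 : ℂ) |r| ⊆ ball 0 R := by
      rw [abs_of_pos hr]; exact closedBall_subset_ball hrR
    rw [(hh.mono (closure_ball_subset_closedBall.trans hball)).diffContOnCl.circleAverage,
      circleAverage_const]
  · simp [indicator, hrR]

end CircleAverage

section Weight

variable {α : ℝ}

theorem continuousOn_one_sub_sq_rpow (hα : -1 < α) :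
    ContinuousOn (fun r : ℝ => -(1 - r ^ 2) ^ (α + 1) / (2 * (α + 1))) (Icc 0 1) := by
  have : 0 ≤ α + 1 := by linarith
  exact ((ContinuousOn.rpow_const (by fun_prop) fun _ _ => .inr this).neg).div_const _

theorem hasDerivAt_one_sub_sq_rpow (hα : -1 < α) {r : ℝ} (hr : r ∈ Ioo (0 : ℝ) 1) :
    HasDerivAt (fun r : ℝ => -(1 - r ^ 2) ^ (α + 1) / (2 * (α + 1))) (r * (1 - r ^ 2) ^ α) r := by
  have hpos : 0 < 1 - r ^ 2 := by nlinarith [hr.1, hr.2]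
  have hα' : α + 1 ≠ 0 := by linarith
  have := (((((hasDerivAt_id r).pow 2).const_sub 1).rpow_const (p := α + 1)
    (.inl hpos.ne')).neg).div_const (2 * (α + 1))
  convert! this using 1
  simp only [id_eq, Pi.pow_apply, add_sub_cancel_right]
  push_cast
  field_simp

theorem integrableOn_mul_one_sub_sq_rpow (hα : -1 < α) :
    IntegrableOn (fun r : ℝ => r * (1 - r ^ 2) ^ α) (Ioc 0 1) :=
  intervalIntegral.integrableOn_deriv_of_nonneg (continuousOn_one_sub_sq_rpow hα)
    (fun _ hr => hasDerivAt_one_sub_sq_rpow hα hr) fun r hr =>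
      mul_nonneg hr.1.le (rpow_nonneg (by nlinarith [hr.1, hr.2]) _)

theorem integrableOn_ball_one_sub_norm_sq_rpow (hα : -1 < α) :
    IntegrableOn (fun ζ : ℂ => (1 - ‖ζ‖ ^ 2) ^ α) (ball 0 1) := by
  rw [integrableOn_fun_norm_addHaar volume (f := fun r => (1 - r ^ 2) ^ α)]
  simpa using (integrableOn_mul_one_sub_sq_rpow hα).mono_set Ioo_subset_Ioc_self

theorem setIntegral_ball_one_sub_norm_sq_rpow (hα : -1 < α) :
    ∫ ζ : ℂ in ball 0 1, (1 - ‖ζ‖ ^ 2) ^ α = π / (α + 1) := by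
  have hα' : α + 1 ≠ 0 := by linarith
  have hint := integrableOn_mul_one_sub_sq_rpow hα
  have hind : ∫ ζ : ℂ in ball 0 1, (1 - ‖ζ‖ ^ 2) ^ α =
      ∫ ζ : ℂ, (Iio 1).indicator (fun r : ℝ => (1 - r ^ 2) ^ α) ‖ζ‖ := by
    rw [← integral_indicator measurableSet_ball]
    refine integral_congr_ae (Filter.Eventually.of_forall fun ζ => ?_)
    simp [indicator]
  have hradial : ∫ r in Ioi (0 : ℝ), r * (Iio 1).indicator (fun r : ℝ => (1 - r ^ 2) ^ α) r =
      ∫ r in (0 : ℝ)..1, r * (1 - r ^ 2) ^ α := by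
    simp only [← indicator_mul_right _ (fun r : ℝ => r)]
    rw [setIntegral_indicator measurableSet_Iio, Ioi_inter_Iio,
      intervalIntegral.integral_of_le zero_le_one, integral_Ioc_eq_integral_Ioo]
  rw [hind, integral_fun_norm_addHaar, measureReal_def, Complex.volume_ball]
  simp only [Complex.finrank_real_complex, Nat.add_one_sub_one, pow_one, smul_eq_mul, hradial]
  rw [intervalIntegral.integral_eq_sub_of_hasDerivAt_of_le zero_le_one
    (continuousOn_one_sub_sq_rpow hα) (fun r hr => hasDerivAt_one_sub_sq_rpow hα hr)
    ((intervalIntegrable_iff_integrableOn_Ioc_of_le zero_le_one).2 hint)]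
  simp only [ENNReal.ofReal_one, one_pow, one_mul, ENNReal.coe_toReal, NNReal.coe_real_pi, sub_self,
    zero_rpow hα', neg_zero, zero_div, ne_eq, OfNat.ofNat_ne_zero, not_false_eq_true, zero_pow,
    sub_zero, one_rpow, zero_sub, mul_neg, smul_neg, nsmul_eq_mul, Nat.cast_ofNat]
  field_simp

end Weight

end Disk

open scoped ComplexConjugate

section Cayley

open Metric

/-- The Cayley map of the unit disk onto the upper half-plane sending `0` to `w`. -/
def cayley (w ζ : ℂ) : ℂ := (w - conj w * ζ) / (1 - ζ)

/-- The density which the measure `y ^ α dx dy` on the upper half-plane acquires when pulled back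
to the unit disk along `cayley w`. -/
def cayleyDensity (α : ℝ) (w ζ : ℂ) : ℝ :=
  4 * w.im ^ (α + 2) * (1 - ‖ζ‖ ^ 2) ^ α / ‖1 - ζ‖ ^ (2 * (α + 2))

variable {w ζ : ℂ}

@[simp]
theorem cayley_zero (w : ℂ) : cayley w 0 = w := by simp [cayley]

theorem re_one_sub_pos (hζ : ζ ∈ ball (0 : ℂ) 1) : 0 < (1 - ζ).re := by
  rw [Complex.sub_re, Complex.one_re, sub_pos]
  exact (Complex.re_le_norm ζ).trans_lt (mem_ball_zero_iff.1 hζ)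

theorem one_sub_ne_zero (hζ : ζ ∈ ball (0 : ℂ) 1) : 1 - ζ ≠ 0 := fun h =>
  (re_one_sub_pos hζ).ne' (by rw [h, Complex.zero_re])

theorem one_sub_norm_sq_pos (hζ : ζ ∈ ball (0 : ℂ) 1) : 0 < 1 - ‖ζ‖ ^ 2 := by
  nlinarith [norm_nonneg ζ, mem_ball_zero_iff.1 hζ]

theorem cayley_sub_conj (w : ℂ) (hζ : ζ ∈ ball (0 : ℂ) 1) :
    cayley w ζ - conj w = (w - conj w) / (1 - ζ) := by
  have := one_sub_ne_zero hζ
  rw [cayley]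
  field_simp
  ring

theorem im_cayley (w ζ : ℂ) :
    (cayley w ζ).im = w.im * (1 - ‖ζ‖ ^ 2) / ‖1 - ζ‖ ^ 2 := by
  rw [cayley, Complex.div_im, ← Complex.normSq_eq_norm_sq, ← Complex.normSq_eq_norm_sq, ← sub_div]
  congr 1
  simp only [Complex.sub_im, Complex.mul_im, Complex.conj_re, Complex.conj_im, neg_mul,
    Complex.sub_re, Complex.one_re, Complex.mul_re, sub_neg_eq_add, Complex.one_im, zero_sub,
    mul_neg, Complex.normSq_apply]
  ring

theorem hasDerivAt_cayley (w : ℂ) (hζ : ζ ∈ ball (0 : ℂ) 1) :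
    HasDerivAt (cayley w) ((w - conj w) / (1 - ζ) ^ 2) ζ := by
  have hnum : HasDerivAt (fun ζ : ℂ => w - conj w * ζ) (-conj w) ζ := by
    simpa using ((hasDerivAt_id ζ).const_mul (conj w)).const_sub w
  have hden : HasDerivAt (fun ζ : ℂ => 1 - ζ) (-1) ζ := (hasDerivAt_id ζ).const_sub 1
  convert! hnum.div hden (one_sub_ne_zero hζ) using 1
  ring

theorem sub_conj_ne_zero (hw : w ∈ UHP) : w - conj w ≠ 0 := by
  have hw : 0 < w.im := hw
  simp [Complex.sub_conj, hw.ne']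

theorem injOn_cayley (hw : w ∈ UHP) : InjOn (cayley w) (ball 0 1) := by
  intro a ha b hb hab
  have h : (w - conj w) / (1 - a) = (w - conj w) / (1 - b) := by
    rw [← cayley_sub_conj w ha, ← cayley_sub_conj w hb, hab]
  rw [div_eq_div_iff (one_sub_ne_zero ha) (one_sub_ne_zero hb)] at h
  exact (sub_right_injective (mul_left_cancel₀ (sub_conj_ne_zero hw) h)).symm

theorem cayley_image_ball (hw : w ∈ UHP) : cayley w '' ball 0 1 = UHP := by
  have hw₀ : 0 < w.im := hw
  refine Subset.antisymm ?_ fun z hz => ?_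
  · rintro _ ⟨ζ, hζ, rfl⟩
    have := norm_pos_iff.2 (one_sub_ne_zero hζ)
    have := one_sub_norm_sq_pos hζ
    change 0 < (cayley w ζ).im
    rw [im_cayley]
    positivity
  · have hz : 0 < z.im := hz
    have hne : z - conj w ≠ 0 := fun h => by
      have := congrArg Complex.im h
      simp only [Complex.sub_im, Complex.conj_im, Complex.zero_im] at this
      linarith
    refine ⟨(z - w) / (z - conj w), ?_, ?_⟩
    · rw [mem_ball_zero_iff, norm_div, div_lt_one (norm_pos_iff.2 hne),
        ← sq_lt_sq₀ (norm_nonneg _) (norm_nonneg _), ← Complex.normSq_eq_norm_sq,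
        ← Complex.normSq_eq_norm_sq, Complex.normSq_apply, Complex.normSq_apply]
      simp only [Complex.sub_re, Complex.sub_im, Complex.conj_re, Complex.conj_im]
      nlinarith [mul_pos hw₀ hz]
    · have hone : 1 - (z - w) / (z - conj w) = (w - conj w) / (z - conj w) := by
        field_simp
        ring
      rw [cayley, hone, div_div_eq_mul_div, div_eq_iff (sub_conj_ne_zero hw)]
      field_simp
      ring

theorem measurableSet_UHP : MeasurableSet UHP :=
  measurableSet_lt measurable_const Complex.measurable_im

theorem det_restrictScalars_toSpanSingleton (a : ℂ) :
    ((ContinuousLinearMap.toSpanSingleton ℂ a).restrictScalars ℝ : ℂ →L[ℝ] ℂ).det = ‖a‖ ^ 2 := by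
  rw [← Complex.normSq_eq_norm_sq, ← Algebra.norm_complex_apply, Algebra.norm_apply,
    ContinuousLinearMap.det]
  congr 1
  ext; simp [mul_comm]

theorem norm_deriv_sq_mul_im_cayley_rpow (α : ℝ) (hw : w ∈ UHP) (hζ : ζ ∈ ball (0 : ℂ) 1) :
    ‖(w - conj w) / (1 - ζ) ^ 2‖ ^ 2 * (cayley w ζ).im ^ α = cayleyDensity α w ζ := by
  have hw : 0 < w.im := hw
  have hN : 0 < ‖1 - ζ‖ := norm_pos_iff.2 (one_sub_ne_zero hζ)
  have ha := one_sub_norm_sq_pos hζ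
  have hnorm : ‖w - conj w‖ = 2 * w.im := by
    rw [Complex.sub_conj, norm_mul, Complex.norm_I, mul_one, Complex.norm_real,
      Real.norm_of_nonneg (by positivity)]
  rw [im_cayley, cayleyDensity, norm_div, hnorm, norm_pow, Real.div_rpow (by positivity)
    (by positivity), Real.mul_rpow hw.le ha.le, Real.rpow_mul hN.le, Real.rpow_ofNat,
    Real.rpow_add hw, Real.rpow_add (by positivity), Real.rpow_ofNat, Real.rpow_ofNat]
  field_simp
  norm_num

section ChangeOfVariables

variable {E : Type*} [NormedAddCommGroup E] [NormedSpace ℝ E] {α : ℝ}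

theorem integral_Vm (α : ℝ) (g : ℂ → E) : ∫ z, g z ∂(Vm α) = ∫ z in UHP, z.im ^ α • g z := by
  rw [Vm, integral_withDensity_eq_integral_toReal_smul₀ (by fun_prop) (by simp)]
  refine setIntegral_congr_fun measurableSet_UHP fun z hz => ?_
  simp only [ENNReal.toReal_ofReal (Real.rpow_nonneg (le_of_lt hz) α)]

theorem integrable_Vm_iff {g : ℂ → E} :
    Integrable g (Vm α) ↔ IntegrableOn (fun z => z.im ^ α • g z) UHP := by
  rw [Vm, integrable_withDensity_iff_integrable_smul₀' (by fun_prop) (by simp)]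
  refine integrableOn_congr_fun (fun z hz => ?_) measurableSet_UHP
  simp only [ENNReal.toReal_ofReal (Real.rpow_nonneg (le_of_lt hz) α)]

theorem abs_det_cayley_smul (hw : w ∈ UHP) (g : ℂ → E) (hζ : ζ ∈ ball (0 : ℂ) 1) :
    |((ContinuousLinearMap.toSpanSingleton ℂ ((w - conj w) / (1 - ζ) ^ 2)).restrictScalars
      ℝ : ℂ →L[ℝ] ℂ).det| • (cayley w ζ).im ^ α • g (cayley w ζ) =
      cayleyDensity α w ζ • g (cayley w ζ) := by
  rw [det_restrictScalars_toSpanSingleton, abs_of_nonneg (by positivity), smul_smul,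
    norm_deriv_sq_mul_im_cayley_rpow α hw hζ]

theorem integral_Vm_eq_integral_ball (hw : w ∈ UHP) (g : ℂ → E) :
    ∫ z, g z ∂(Vm α) = ∫ ζ in ball (0 : ℂ) 1, cayleyDensity α w ζ • g (cayley w ζ) := by
  rw [integral_Vm, ← cayley_image_ball hw, integral_image_eq_integral_abs_det_fderiv_smul volume
    measurableSet_ball (fun ζ hζ =>
      ((hasDerivAt_cayley w hζ).hasFDerivAt.restrictScalars ℝ).hasFDerivWithinAt)
    (injOn_cayley hw)]
  exact setIntegral_congr_fun measurableSet_ball fun ζ hζ => abs_det_cayley_smul hw g hζ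

theorem integrable_Vm_iff_integrableOn_ball (hw : w ∈ UHP) {g : ℂ → E} :
    Integrable g (Vm α) ↔
      IntegrableOn (fun ζ => cayleyDensity α w ζ • g (cayley w ζ)) (ball (0 : ℂ) 1) := by
  rw [integrable_Vm_iff, ← cayley_image_ball hw,
    integrableOn_image_iff_integrableOn_abs_det_fderiv_smul volume measurableSet_ball
    (fun ζ hζ => ((hasDerivAt_cayley w hζ).hasFDerivAt.restrictScalars ℝ).hasFDerivWithinAt)
    (injOn_cayley hw)]
  exact integrableOn_congr_fun (fun ζ hζ => abs_det_cayley_smul hw g hζ) measurableSet_ball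

end ChangeOfVariables

end Cayley

section BergmanKernel

open Metric

/-- The reproducing kernel at `w` of the weighted Bergman space `A²_α` of the upper half-plane. -/
def bergmanKernel (α : ℝ) (w z : ℂ) : ℂ :=
  ((α + 1) * 2 ^ α / Real.pi : ℝ) * (-Complex.I * (z - conj w)) ^ ((-(α + 2) : ℝ) : ℂ)

variable {α : ℝ} {w z ζ : ℂ}

theorem re_neg_I_mul_pos (hz : z ∈ UHP) : 0 < (-Complex.I * z).re := by
  simpa [UHP] using hz

theorem sub_conj_mem_UHP (hw : w ∈ UHP) (hz : z ∈ UHP) : z - conj w ∈ UHP := by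
  simpa [UHP] using add_pos hz hw

theorem measurable_bergmanKernel (α : ℝ) (w : ℂ) : Measurable (bergmanKernel α w) := by
  unfold bergmanKernel
  fun_prop

theorem differentiableOn_bergmanKernel (α : ℝ) (hw : w ∈ UHP) :
    DifferentiableOn ℂ (bergmanKernel α w) UHP := fun z hz => by
  refine ((DifferentiableAt.cpow_const (by fun_prop) ?_).const_mul _).differentiableWithinAt
  exact Complex.mem_slitPlane_iff.2 (Or.inl (re_neg_I_mul_pos (sub_conj_mem_UHP hw hz)))

theorem bergmanKernel_ne_zero (hα : -1 < α) (hw : w ∈ UHP) (hz : z ∈ UHP) :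
    bergmanKernel α w z ≠ 0 := by
  have hα : 0 < α + 1 := by linarith
  refine mul_ne_zero (by exact_mod_cast (by positivity : (α + 1) * 2 ^ α / Real.pi ≠ 0)) ?_
  refine mt (fun h => (Complex.cpow_eq_zero_iff _ _).1 h |>.1) fun h => ?_
  simpa [h] using re_neg_I_mul_pos (sub_conj_mem_UHP hw hz)

theorem conj_cpow_ofReal (s : ℝ) (hz : z ≠ 0) :
    conj (z ^ (s : ℂ)) = (‖z‖ ^ (2 * s) : ℝ) * z ^ (-(s : ℂ)) := by
  have hzs : z ^ (s : ℂ) ≠ 0 := by simp [Complex.cpow_eq_zero_iff, hz]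
  rw [Complex.cpow_neg, eq_mul_inv_iff_mul_eq₀ hzs, Complex.conj_mul', Complex.norm_cpow_real,
    mul_comm 2 s, Real.rpow_mul (norm_nonneg z), Real.rpow_ofNat, Complex.ofReal_pow]

theorem ofReal_mul_inv_cpow_neg {r : ℝ} (hr : 0 < r) (hz : 0 < z.re) (s : ℝ) :
    ((r : ℂ) * z⁻¹) ^ ((-s : ℝ) : ℂ) = (r ^ (-s) : ℝ) * z ^ (s : ℂ) := by
  have hz₀ : z ≠ 0 := fun h => by simp [h] at hz
  have harg : z.arg ≠ Real.pi := fun h => by linarith [(Complex.arg_eq_pi_iff.1 h).1]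
  rw [Complex.cpow_def_of_ne_zero (mul_ne_zero (by exact_mod_cast hr.ne') (inv_ne_zero hz₀)),
    Complex.log_ofReal_mul hr (inv_ne_zero hz₀), Complex.log_inv _ harg,
    Complex.cpow_def_of_ne_zero hz₀, Real.rpow_def_of_pos hr, Complex.ofReal_exp, ← Complex.exp_add]
  congr 1
  push_cast
  ring

theorem bergmanKernel_cayley (α : ℝ) (hw : w ∈ UHP) (hζ : ζ ∈ ball (0 : ℂ) 1) :
    bergmanKernel α w (cayley w ζ) =
      ((α + 1) * 2 ^ α / Real.pi * (2 * w.im) ^ (-(α + 2)) : ℝ) * (1 - ζ) ^ ((α + 2 : ℝ) : ℂ) := by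
  have hw : 0 < w.im := hw
  have hbase : -Complex.I * (cayley w ζ - conj w) = ((2 * w.im : ℝ) : ℂ) * (1 - ζ)⁻¹ := by
    rw [cayley_sub_conj w hζ, Complex.sub_conj]
    linear_combination (-((2 * w.im : ℝ) : ℂ) * (1 - ζ)⁻¹) * Complex.I_mul_I
  rw [bergmanKernel, hbase, ofReal_mul_inv_cpow_neg (by positivity) (re_one_sub_pos hζ),
    Complex.ofReal_mul (_ / _), mul_assoc]

theorem cayleyDensity_mul_conj_bergmanKernel (α : ℝ) (hw : w ∈ UHP) (hζ : ζ ∈ ball (0 : ℂ) 1) :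
    cayleyDensity α w ζ * conj (bergmanKernel α w (cayley w ζ)) =
      ((α + 1) / Real.pi * (1 - ‖ζ‖ ^ 2) ^ α : ℝ) * (1 - ζ) ^ (-((α + 2 : ℝ) : ℂ)) := by
  have hN : 0 < ‖1 - ζ‖ := norm_pos_iff.2 (one_sub_ne_zero hζ)
  have hw₀ : 0 < w.im := hw
  rw [bergmanKernel_cayley α hw hζ, map_mul, Complex.conj_ofReal,
    conj_cpow_ofReal _ (one_sub_ne_zero hζ), ← mul_assoc, ← mul_assoc, ← Complex.ofReal_mul,
    ← Complex.ofReal_mul]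
  congr 2
  rw [cayleyDensity, Real.mul_rpow (by norm_num) hw₀.le, Real.rpow_neg hw₀.le, neg_add,
    Real.rpow_add two_pos, Real.rpow_neg two_pos.le α]
  simp only [Real.rpow_neg_ofNat, Int.reduceNeg, zpow_neg, zpow_ofNat]
  field_simp
  norm_num

theorem memLp_bergmanKernel (hα : -1 < α) (hw : w ∈ UHP) :
    MemLp (bergmanKernel α w) 2 (Vm α) := by
  rw [memLp_two_iff_integrable_sq_norm (measurable_bergmanKernel α w).aestronglyMeasurable]
  have hint : Integrable (fun z => conj (bergmanKernel α w z) * bergmanKernel α w z) (Vm α) := by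
    have hweight (c : ℝ) :
        IntegrableOn (fun ζ : ℂ => (((1 - ‖ζ‖ ^ 2) ^ α * c : ℝ) : ℂ)) (ball 0 1) :=
      ((integrableOn_ball_one_sub_norm_sq_rpow hα).mul_const c).ofReal
    rw [integrable_Vm_iff_integrableOn_ball hw]
    refine (integrableOn_congr_fun (fun ζ hζ => ?_) measurableSet_ball).1
      (hweight ((α + 1) / Real.pi * ((α + 1) * 2 ^ α / Real.pi * (2 * w.im) ^ (-(α + 2)))))
    have hpow : (1 - ζ) ^ ((α + 2 : ℝ) : ℂ) ≠ 0 := by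
      simp [Complex.cpow_eq_zero_iff, one_sub_ne_zero hζ]
    rw [Complex.real_smul, ← mul_assoc (cayleyDensity α w ζ : ℂ),
      cayleyDensity_mul_conj_bergmanKernel α hw hζ, bergmanKernel_cayley α hw hζ,
      Complex.cpow_neg, mul_mul_mul_comm, inv_mul_cancel₀ hpow, mul_one, ← Complex.ofReal_mul,
      mul_right_comm, mul_comm ((1 - ‖ζ‖ ^ 2) ^ α)]
  simpa only [norm_mul, RCLike.norm_conj, ← sq] using hint.norm

variable {E : Type*} [NormedAddCommGroup E] [NormedSpace ℂ E] [CompleteSpace E]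

theorem integral_conj_bergmanKernel_smul (hα : -1 < α) (hw : w ∈ UHP) {g : ℂ → E}
    (hg : DifferentiableOn ℂ g UHP)
    (hint : Integrable (fun z => conj (bergmanKernel α w z) • g z) (Vm α)) :
    ∫ z, conj (bergmanKernel α w z) • g z ∂(Vm α) = g w := by
  have hα₁ : (α + 1) / Real.pi ≠ 0 := (div_pos (by linarith) Real.pi_pos).ne'
  have hball : ∀ ζ ∈ ball (0 : ℂ) 1,
      cayleyDensity α w ζ • conj (bergmanKernel α w (cayley w ζ)) • g (cayley w ζ) =
      ((α + 1) / Real.pi) • (1 - ‖ζ‖ ^ 2) ^ α •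
        (1 - ζ) ^ (-((α + 2 : ℝ) : ℂ)) • g (cayley w ζ) := fun ζ hζ => by
    rw [← Complex.coe_smul (cayleyDensity α w ζ), smul_smul,
      cayleyDensity_mul_conj_bergmanKernel α hw hζ, mul_smul, Complex.coe_smul, mul_smul]
  have hdiff : DifferentiableOn ℂ
      (fun ζ => (1 - ζ) ^ (-((α + 2 : ℝ) : ℂ)) • g (cayley w ζ)) (ball 0 1) := by
    refine DifferentiableOn.smul (fun ζ hζ => ?_) (hg.comp
      (fun ζ hζ => (hasDerivAt_cayley w hζ).differentiableAt.differentiableWithinAt)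
      (mapsTo_iff_image_subset.2 (cayley_image_ball hw).subset))
    exact (DifferentiableAt.cpow_const (by fun_prop)
      (Complex.mem_slitPlane_iff.2 (Or.inl (re_one_sub_pos hζ)))).differentiableWithinAt
  rw [integrable_Vm_iff_integrableOn_ball hw, integrableOn_congr_fun hball measurableSet_ball,
    IntegrableOn, integrable_fun_smul_iff hα₁] at hint
  rw [integral_Vm_eq_integral_ball hw, setIntegral_congr_fun measurableSet_ball hball,
    integral_smul, setIntegral_ball_norm_smul_eq (w := fun r => (1 - r ^ 2) ^ α) hdiff
      (integrableOn_ball_one_sub_norm_sq_rpow hα) hint,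
    setIntegral_ball_one_sub_norm_sq_rpow hα]
  have hα₂ : α + 1 ≠ 0 := by linarith
  simp only [sub_zero, Complex.one_cpow, one_smul, cayley_zero, smul_smul]
  field_simp
  rw [one_smul]

end BergmanKernel

section BergmanProd

instance sFinite_Vm (α : ℝ) : SFinite (Vm α) := by
  unfold Vm
  infer_instance

/-- The reproducing kernel at `p` of the weighted Bergman space `A²_{(α,β)}` of the product of two
upper half-planes. -/
def bergmanKernelProd (α β : ℝ) (p z : ℂ × ℂ) : ℂ :=
  bergmanKernel α p.1 z.1 * bergmanKernel β p.2 z.2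

variable {α β : ℝ} {p : ℂ × ℂ}

theorem ae_mem_UHP (α : ℝ) : ∀ᵐ z ∂(Vm α), z ∈ UHP :=
  (withDensity_absolutelyContinuous _ _).ae_le (ae_restrict_mem measurableSet_UHP)

theorem ae_mem_UHP_prod (α β : ℝ) : ∀ᵐ z ∂((Vm α).prod (Vm β)), z ∈ UHP ×ˢ UHP :=
  (Measure.quasiMeasurePreserving_fst.ae (ae_mem_UHP α)).and
    (Measure.quasiMeasurePreserving_snd.ae (ae_mem_UHP β))

theorem memLp_bergmanKernelProd (hα : -1 < α) (hβ : -1 < β) (hp : p ∈ UHP ×ˢ UHP) :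
    MemLp (bergmanKernelProd α β p) 2 ((Vm α).prod (Vm β)) := by
  have h1 := memLp_bergmanKernel hα hp.1
  have h2 := memLp_bergmanKernel hβ hp.2
  have hmeas : AEStronglyMeasurable (bergmanKernelProd α β p) ((Vm α).prod (Vm β)) :=
    h1.1.comp_fst.mul h2.1.comp_snd
  refine (memLp_two_iff_integrable_sq_norm hmeas).2 ?_
  simpa only [bergmanKernelProd, norm_mul, mul_pow] using
    ((memLp_two_iff_integrable_sq_norm h1.1).1 h1).mul_prod
      ((memLp_two_iff_integrable_sq_norm h2.1).1 h2)

theorem differentiableOn_bergmanKernelProd (α β : ℝ) (hp : p ∈ UHP ×ˢ UHP) :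
    DifferentiableOn ℂ (bergmanKernelProd α β p) (UHP ×ˢ UHP) :=
  ((differentiableOn_bergmanKernel α hp.1).comp differentiableOn_fst fun _ hz => hz.1).mul
    ((differentiableOn_bergmanKernel β hp.2).comp differentiableOn_snd fun _ hz => hz.2)

section Reproducing

variable {E : Type*} [NormedAddCommGroup E] [NormedSpace ℂ E] [CompleteSpace E]

theorem integral_conj_bergmanKernelProd_smul (hα : -1 < α) (hβ : -1 < β) (hp : p ∈ UHP ×ˢ UHP)
    {G : ℂ × ℂ → E} (hG : DifferentiableOn ℂ G (UHP ×ˢ UHP))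
    (hint : Integrable (fun z => conj (bergmanKernelProd α β p z) • G z)
      ((Vm α).prod (Vm β))) :
    ∫ z, conj (bergmanKernelProd α β p z) • G z ∂((Vm α).prod (Vm β)) = G p := by
  have hinner : ∀ᵐ x ∂(Vm α), ∫ y, conj (bergmanKernelProd α β p (x, y)) • G (x, y) ∂(Vm β) =
      conj (bergmanKernel α p.1 x) • G (x, p.2) := by
    filter_upwards [hint.prod_right_ae, ae_mem_UHP α] with x hx hxU
    have hne : conj (bergmanKernel α p.1 x) ≠ 0 :=
      (map_ne_zero _).2 (bergmanKernel_ne_zero hα hp.1 hxU)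
    simp only [bergmanKernelProd, map_mul, mul_smul] at hx ⊢
    rw [integrable_fun_smul_iff hne] at hx
    have hGx : DifferentiableOn ℂ (fun y => G (x, y)) UHP :=
      hG.comp (by fun_prop) fun y hy => ⟨hxU, hy⟩
    rw [integral_smul, integral_conj_bergmanKernel_smul hβ hp.2 hGx hx]
  have hGp : DifferentiableOn ℂ (fun x => G (x, p.2)) UHP :=
    hG.comp (by fun_prop) fun x hx => ⟨hx, hp.2⟩
  rw [integral_prod _ hint, integral_congr_ae hinner]
  exact integral_conj_bergmanKernel_smul hα hp.1 hGp (hint.integral_prod_left.congr hinner)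

end Reproducing

/-- The kernels `bergmanKernelProd α β q`, `q ∈ Π⁺ × Π⁺`, as elements of `L²`. -/
def bergmanKernelLp (hα : -1 < α) (hβ : -1 < β) (q : (UHP ×ˢ UHP : Set (ℂ × ℂ))) :
    Lp ℂ 2 ((Vm α).prod (Vm β)) :=
  (memLp_bergmanKernelProd hα hβ q.2).toLp _

variable {G : ℂ × ℂ → ℂ}

theorem inner_bergmanKernelLp_toLp (hα : -1 < α) (hβ : -1 < β)
    (q : (UHP ×ˢ UHP : Set (ℂ × ℂ))) (hG : DifferentiableOn ℂ G (UHP ×ˢ UHP))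
    (hG₂ : MemLp G 2 ((Vm α).prod (Vm β))) :
    inner ℂ (bergmanKernelLp hα hβ q) (hG₂.toLp G) = G q := by
  rw [bergmanKernelLp, inner_toLp_toLp]
  simp_rw [mul_comm (G _)]
  exact integral_conj_bergmanKernelProd_smul hα hβ q.2 hG
    ((memLp_bergmanKernelProd hα hβ q.2).star.integrable_mul hG₂)

theorem toLp_mem_reproducedSubmodule_bergmanKernelLp (hα : -1 < α) (hβ : -1 < β)
    (hG : DifferentiableOn ℂ G (UHP ×ˢ UHP)) (hG₂ : MemLp G 2 ((Vm α).prod (Vm β))) :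
    hG₂.toLp G ∈ reproducedSubmodule (bergmanKernelLp hα hβ) := by
  filter_upwards [hG₂.coeFn_toLp] with x hx hxS
  rw [inner_bergmanKernelLp_toLp hα hβ ⟨x, hxS⟩ hG hG₂, hx]

theorem toLp_mem_topologicalClosure_span_bergmanKernelLp (hα : -1 < α) (hβ : -1 < β)
    (hG : DifferentiableOn ℂ G (UHP ×ˢ UHP)) (hG₂ : MemLp G 2 ((Vm α).prod (Vm β))) :
    hG₂.toLp G ∈ (Submodule.span ℂ (range (bergmanKernelLp hα hβ))).topologicalClosure :=
  reproducedSubmodule_le_topologicalClosure_span (ae_mem_UHP_prod α β)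
    (fun q => toLp_mem_reproducedSubmodule_bergmanKernelLp hα hβ
      (differentiableOn_bergmanKernelProd α β q.2) (memLp_bergmanKernelProd hα hβ q.2))
    (toLp_mem_reproducedSubmodule_bergmanKernelLp hα hβ hG hG₂)

theorem memLp_of_bergNormSqProd_lt_top (hG : DifferentiableOn ℂ G (UHP ×ˢ UHP))
    (hfin : bergNormSqProd α β G < ⊤) : MemLp G 2 ((Vm α).prod (Vm β)) := by
  have hmeas : AEStronglyMeasurable G ((Vm α).prod (Vm β)) := by
    have := hG.continuousOn.aestronglyMeasurable (μ := (Vm α).prod (Vm β))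
      (measurableSet_UHP.prod measurableSet_UHP)
    rwa [Measure.restrict_eq_self_of_ae_mem (ae_mem_UHP_prod α β)] at this
  exact ⟨hmeas, (eLpNorm_lt_top_iff_lintegral_rpow_enorm_lt_top two_ne_zero ENNReal.ofNat_ne_top).2
    (by simpa [bergNormSqProd, enorm] using hfin)⟩

end BergmanProd

theorem lintegral_enorm_sq_eq {X E : Type*} [MeasurableSpace X] [NormedAddCommGroup E]
    {μ : Measure X} (f : X → E) :
    ∫⁻ x, ‖f x‖ₑ ^ 2 ∂μ = eLpNorm f 2 μ ^ 2 := by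
  simpa using (eLpNorm_nnreal_pow_eq_lintegral (f := f) (μ := μ) (p := 2) (by norm_num)).symm

theorem ofReal_norm_toLp_sq {X E : Type*} [MeasurableSpace X] [NormedAddCommGroup E]
    {μ : Measure X} {f : X → E} (hf : MemLp f 2 μ) :
    ENNReal.ofReal (‖hf.toLp f‖ ^ 2) = ∫⁻ x, ‖f x‖ₑ ^ 2 ∂μ := by
  rw [ENNReal.ofReal_pow (norm_nonneg _), Lp.norm_toLp, ENNReal.ofReal_toReal hf.eLpNorm_ne_top,
    lintegral_enorm_sq_eq]

section Gamma

open Filter Topology ProbabilityTheory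

theorem eqOn_re_pos_of_forall_ofReal {E : Type*} [NormedAddCommGroup E] [NormedSpace ℂ E]
    [CompleteSpace E] {f g : ℂ → E} (hf : DifferentiableOn ℂ f {z | 0 < z.re})
    (hg : DifferentiableOn ℂ g {z | 0 < z.re}) (h : ∀ x : ℝ, 0 < x → f x = g x) :
    EqOn f g {z | 0 < z.re} := by
  have hopen : IsOpen {z : ℂ | 0 < z.re} := isOpen_lt continuous_const Complex.continuous_re
  have hreal : ∃ᶠ x : ℝ in 𝓝[≠] 1, f x = g x :=
    (eventually_nhdsWithin_of_eventually_nhds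
      ((lt_mem_nhds one_pos).mono fun x hx => h x hx)).frequently
  have hlim : Tendsto ((↑) : ℝ → ℂ) (𝓝[≠] 1) (𝓝[≠] 1) :=
    Complex.continuous_ofReal.continuousWithinAt.tendsto_nhdsWithin
      fun x hx => by simpa using hx
  exact (hf.analyticOnNhd hopen).eqOn_of_preconnected_of_frequently_eq (hg.analyticOnNhd hopen)
    (convex_halfSpace_re_gt 0).isPreconnected (by simp) (hlim.frequently hreal)

/-- The measure `t ^ (s - 1) dt` on the positive half-line, whose Laplace transform is
`r ↦ Γ(s) r ^ (-s)`. -/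
def rpowMeasure (s : ℝ) : Measure ℝ :=
  (volume.restrict (Ioi 0)).withDensity fun t => ENNReal.ofReal (t ^ (s - 1))

theorem integral_rpowMeasure {E : Type*} [NormedAddCommGroup E] [NormedSpace ℝ E] (s : ℝ)
    (g : ℝ → E) : ∫ t, g t ∂(rpowMeasure s) = ∫ t in Ioi 0, t ^ (s - 1) • g t := by
  rw [rpowMeasure, integral_withDensity_eq_integral_toReal_smul₀ (by fun_prop) (by simp)]
  refine setIntegral_congr_fun measurableSet_Ioi fun t ht => ?_
  simp only [ENNReal.toReal_ofReal (Real.rpow_nonneg (le_of_lt ht) _)]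

theorem integral_exp_neg_mul_rpowMeasure {s r : ℝ} (hs : 0 < s) (hr : 0 < r) :
    ∫ t, Real.exp (-r * t) ∂(rpowMeasure s) = Real.Gamma s * r ^ (-s) := by
  simp only [integral_rpowMeasure, smul_eq_mul, neg_mul]
  rw [Real.integral_rpow_mul_exp_neg_mul_Ioi hs hr, one_div, Real.inv_rpow hr.le,
    Real.rpow_neg hr.le, mul_comm]

theorem Iio_subset_integrableExpSet_rpowMeasure {s : ℝ} (hs : 0 < s) :
    Iio 0 ⊆ integrableExpSet id (rpowMeasure s) := fun r hr => by
  refine Integrable.of_integral_ne_zero ?_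
  have hr : 0 < -r := neg_pos.2 hr
  have h := integral_exp_neg_mul_rpowMeasure hs hr
  rw [neg_neg] at h
  simp only [id, h]
  have := Real.Gamma_pos_of_pos hs
  positivity

theorem integral_rpow_mul_cexp_neg_mul_Ioi {s : ℝ} (hs : 0 < s) {r : ℂ} (hr : 0 < r.re) :
    ∫ t in Ioi (0 : ℝ), ((t ^ (s - 1) : ℝ) : ℂ) * Complex.exp (-(r * t)) =
      Real.Gamma s * r ^ (-(s : ℂ)) := by
  have hmgf : DifferentiableOn ℂ (fun r => complexMGF id (rpowMeasure s) (-r)) {z | 0 < z.re} := by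
    refine differentiableOn_complexMGF.comp differentiable_neg.differentiableOn fun z hz => ?_
    exact interior_maximal (Iio_subset_integrableExpSet_rpowMeasure hs) isOpen_Iio
      (by simpa using hz)
  have hpow : DifferentiableOn ℂ (fun r : ℂ => Real.Gamma s * r ^ (-(s : ℂ))) {z | 0 < z.re} :=
    fun z hz => ((DifferentiableAt.cpow_const differentiableAt_id
      (Complex.mem_slitPlane_iff.2 (Or.inl hz))).const_mul _).differentiableWithinAt
  have heq := eqOn_re_pos_of_forall_ofReal hmgf hpow (fun x hx => ?_) hr
  · simpa [complexMGF, integral_rpowMeasure] using heq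
  · rw [← Complex.ofReal_neg, complexMGF_ofReal, mgf]
    simp only [id, integral_exp_neg_mul_rpowMeasure hs hx]
    push_cast [Complex.ofReal_cpow hx.le]
    rfl

end Gamma

theorem intervalIntegral_sqrt_sub_sq_pow (n : ℕ) {a : ℝ} (ha : 0 < a) :
    ∫ x in -√a..√a, (a - x ^ 2) ^ n = a ^ (n + 1 / 2 : ℝ) * ∫ x in (-1)..1, (1 - x ^ 2) ^ n := by
  have hscale := intervalIntegral.mul_integral_comp_mul_left (a := -1) (b := 1)
    (f := fun x => (a - x ^ 2) ^ n) √a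
  have hpt (x : ℝ) : (a - (√a * x) ^ 2) ^ n = a ^ n * (1 - x ^ 2) ^ n := by
    rw [mul_pow, Real.sq_sqrt ha.le, ← mul_pow, mul_sub, mul_one]
  simp only [hpt, intervalIntegral.integral_const_mul, mul_neg, mul_one] at hscale
  rw [← hscale, Real.rpow_add ha, Real.rpow_natCast, ← Real.sqrt_eq_rpow]
  ring

theorem intervalIntegral_one_sub_sq_pow_pos (n : ℕ) :
    0 < ∫ x in (-1 : ℝ)..1, (1 - x ^ 2) ^ n :=
  intervalIntegral.intervalIntegral_pos_of_pos_on
    (Continuous.intervalIntegrable (by fun_prop) _ _)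
    (fun x hx => pow_pos (by nlinarith [hx.1, hx.2]) n) (by norm_num)

section FourierLaplace

open Filter Topology

variable {ι : Type*}

/-- The tube domain `ℝ^ι + iΩ` over a base `Ω`. -/
def tube (Ω : Set (ι → ℝ)) : Set (ι → ℂ) :=
  {z | (fun i => (z i).im) ∈ Ω}

theorem isOpen_tube {Ω : Set (ι → ℝ)} (hΩ : IsOpen Ω) : IsOpen (tube Ω) :=
  hΩ.preimage (by fun_prop)

variable [Fintype ι]

/-- The complex-linear extension of `y ↦ y ⬝ᵥ t` to `ι → ℂ`. -/
def complexDot (t : ι → ℝ) : (ι → ℂ) →L[ℂ] ℂ :=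
  ∑ i, (t i : ℂ) • ContinuousLinearMap.proj i

theorem complexDot_apply (t : ι → ℝ) (z : ι → ℂ) : complexDot t z = ∑ i, (t i : ℂ) * z i := by
  simp [complexDot]

theorem complexDot_single [DecidableEq ι] (t : ι → ℝ) (i : ι) :
    complexDot t (Pi.single i 1) = t i := by
  simp [complexDot_apply, Pi.single_apply]

@[fun_prop]
theorem continuous_complexDot : Continuous (complexDot : (ι → ℝ) → (ι → ℂ) →L[ℂ] ℂ) := by
  unfold complexDot
  fun_prop

theorem norm_complexDot_le (t : ι → ℝ) : ‖complexDot t‖ ≤ Fintype.card ι * ‖t‖ := by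
  refine ContinuousLinearMap.opNorm_le_bound _ (by positivity) fun z => ?_
  rw [complexDot_apply]
  calc ‖∑ i, (t i : ℂ) * z i‖ ≤ ∑ _i : ι, ‖t‖ * ‖z‖ := norm_sum_le_of_le _ fun i _ => by
        rw [norm_mul, Complex.norm_real]
        gcongr <;> exact norm_le_pi_norm _ i
    _ = Fintype.card ι * ‖t‖ * ‖z‖ := by simp [mul_assoc]

theorem norm_cexp_I_mul_complexDot (t : ι → ℝ) (z : ι → ℂ) :
    ‖Complex.exp (Complex.I * complexDot t z)‖ = Real.exp (-((fun i => (z i).im) ⬝ᵥ t)) := by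
  simp [Complex.norm_exp, complexDot_apply, dotProduct, mul_comm]

theorem exp_mul_norm_le_one_add_sum {δ : ℝ} (hδ : 0 < δ) (t : ι → ℝ) :
    Real.exp (δ * ‖t‖) ≤ 1 + ∑ i, (Real.exp (δ * t i) + Real.exp (-(δ * t i))) := by
  set R : ℝ := 1 + ∑ i, (Real.exp (δ * t i) + Real.exp (-(δ * t i))) with hR
  have hR1 : 1 ≤ R := le_add_of_nonneg_right (by positivity)
  have hcoord (i : ι) : δ * |t i| ≤ Real.log R := by
    have habs : δ * |t i| = |δ * t i| := by rw [abs_mul, abs_of_pos hδ]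
    rw [Real.le_log_iff_exp_le (by positivity), habs]
    calc Real.exp |δ * t i| ≤ Real.exp (δ * t i) + Real.exp (-(δ * t i)) := Real.exp_abs_le _
      _ ≤ ∑ i, (Real.exp (δ * t i) + Real.exp (-(δ * t i))) :=
        Finset.single_le_sum (f := fun i => Real.exp (δ * t i) + Real.exp (-(δ * t i)))
          (fun _ _ => by positivity) (Finset.mem_univ i)
      _ ≤ R := le_add_of_nonneg_left zero_le_one
  rw [← Real.le_log_iff_exp_le (by positivity), ← le_div_iff₀' hδ,
    pi_norm_le_iff_of_nonneg (div_nonneg (Real.log_nonneg hR1) hδ.le)]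
  exact fun i => (le_div_iff₀' hδ).2 (hcoord i)

variable (μ : Measure (ι → ℝ)) (f : (ι → ℝ) → ℂ)

/-- The Fourier–Laplace transform `z ↦ ∫ f(t) e^{i z·t} dμ(t)`. -/
def fourierLaplace (z : ι → ℂ) : ℂ :=
  ∫ t, f t * Complex.exp (Complex.I * complexDot t z) ∂μ

/-- The set of `y` for which the integral defining the Fourier–Laplace transform converges
absolutely on `ℝ^ι + iy`. -/
def expDomain : Set (ι → ℝ) :=
  {y | Integrable (fun t => f t * Real.exp (-(y ⬝ᵥ t))) μ}

variable {μ f}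

theorem aestronglyMeasurable_of_mem_expDomain {y : ι → ℝ} (hy : y ∈ expDomain μ f) :
    AEStronglyMeasurable f μ := by
  have hexp : Continuous fun t : ι → ℝ => (Real.exp (y ⬝ᵥ t) : ℂ) := by fun_prop
  refine (hy.aestronglyMeasurable.mul hexp.aestronglyMeasurable).congr (.of_forall fun t => ?_)
  simp only [Pi.mul_apply, mul_assoc, ← Complex.ofReal_mul, ← Real.exp_add, neg_add_cancel,
    Real.exp_zero, Complex.ofReal_one, mul_one]

theorem aestronglyMeasurable_mul_cexp (hf : AEStronglyMeasurable f μ) (z : ι → ℂ) :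
    AEStronglyMeasurable (fun t => f t * Complex.exp (Complex.I * complexDot t z)) μ :=
  hf.mul (Continuous.aestronglyMeasurable (by fun_prop))

theorem integrable_mul_cexp {z : ι → ℂ} (hz : z ∈ tube (expDomain μ f)) :
    Integrable (fun t => f t * Complex.exp (Complex.I * complexDot t z)) μ := by
  refine (integrable_norm_iff (aestronglyMeasurable_mul_cexp
    (aestronglyMeasurable_of_mem_expDomain hz) z)).1 (hz.norm.congr (.of_forall fun t => ?_))
  simp only [norm_mul, norm_cexp_I_mul_complexDot, Complex.norm_real, Real.norm_eq_abs,
    Real.abs_exp]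

theorem exists_integrable_exp_mul_norm {y : ι → ℝ} (hy : y ∈ interior (expDomain μ f)) :
    ∃ δ > 0, Integrable (fun t => ‖f t‖ * Real.exp (δ * ‖t‖ - y ⬝ᵥ t)) μ := by
  classical
  obtain ⟨δ, hδ, hball⟩ := Metric.nhds_basis_closedBall.mem_iff.1 (mem_interior_iff_mem_nhds.1 hy)
  have hmem (i : ι) (a : ℝ) (ha : |a| = δ) : y + Pi.single i a ∈ expDomain μ f :=
    hball (by simp [Pi.norm_single, ha])
  have hint : Integrable (fun t => ‖f t * Real.exp (-(y ⬝ᵥ t))‖ +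
      ∑ i, (‖f t * Real.exp (-((y + Pi.single i (-δ)) ⬝ᵥ t))‖ +
        ‖f t * Real.exp (-((y + Pi.single i δ) ⬝ᵥ t))‖)) μ :=
    (interior_subset hy).norm.add <| integrable_finsetSum _ fun i _ =>
      (hmem i (-δ) (by simp [abs_of_pos hδ])).norm.add (hmem i δ (abs_of_pos hδ)).norm
  have hmeas := (aestronglyMeasurable_of_mem_expDomain (interior_subset hy)).norm
  refine ⟨δ, hδ, hint.mono' (hmeas.mul (Continuous.aestronglyMeasurable (by fun_prop)))
    (.of_forall fun t => ?_)⟩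
  simp only [norm_mul, Complex.norm_real, Real.norm_eq_abs, Real.abs_exp, add_dotProduct,
    single_dotProduct, neg_add, Real.exp_add, ← mul_add, ← Finset.mul_sum, neg_mul, neg_neg,
    abs_norm, sub_eq_add_neg]
  rw [mul_comm (Real.exp (δ * ‖t‖)), ← mul_one_add]
  gcongr
  exact exp_mul_norm_le_one_add_sum hδ t

theorem pow_mul_exp_le {δ : ℝ} (hδ : 0 < δ) (k : ℕ) {x : ℝ} (hx : 0 ≤ x) :
    x ^ k ≤ k.factorial / δ ^ k * Real.exp (δ * x) := by
  have := Real.pow_div_factorial_le_exp (δ * x) (by positivity) k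
  rw [div_le_iff₀ (by positivity), mul_pow] at this
  rw [div_mul_eq_mul_div, le_div_iff₀ (by positivity)]
  linarith

theorem interior_expDomain_subset_mul {φ : (ι → ℝ) → ℂ} (hφ : Measurable φ) {C : ℝ} {k : ℕ}
    (hbound : ∀ t, ‖φ t‖ ≤ C * ‖t‖ ^ k) :
    interior (expDomain μ f) ⊆ interior (expDomain μ fun t => φ t * f t) := by
  refine interior_maximal (fun y hy => ?_) isOpen_interior
  obtain ⟨δ, hδ, hint⟩ := exists_integrable_exp_mul_norm hy
  have hf := aestronglyMeasurable_of_mem_expDomain (interior_subset hy)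
  refine (hint.const_mul (|C| * (k.factorial / δ ^ k))).mono'
    ((hφ.aestronglyMeasurable.mul hf).mul (Continuous.aestronglyMeasurable (by fun_prop)))
    (.of_forall fun t => ?_)
  have hφt : ‖φ t‖ ≤ |C| * (k.factorial / δ ^ k * Real.exp (δ * ‖t‖)) :=
    (hbound t).trans <| mul_le_mul (le_abs_self C) (pow_mul_exp_le hδ k (norm_nonneg t))
      (by positivity) (abs_nonneg C)
  simp only [norm_mul, Complex.norm_real, Real.norm_eq_abs, Real.abs_exp]
  calc ‖φ t‖ * ‖f t‖ * Real.exp (-(y ⬝ᵥ t))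
      ≤ |C| * (k.factorial / δ ^ k * Real.exp (δ * ‖t‖)) * ‖f t‖ * Real.exp (-(y ⬝ᵥ t)) := by
        gcongr
    _ = |C| * (k.factorial / δ ^ k) * (‖f t‖ * Real.exp (δ * ‖t‖ - y ⬝ᵥ t)) := by
        rw [sub_eq_add_neg, Real.exp_add]
        ring

theorem norm_complexDot_mul_cexp_le {δ : ℝ} (hδ : 0 < δ) {z w : ι → ℂ}
    (hw : w ∈ Metric.ball z (δ / (2 * (Fintype.card ι + 1)))) (t : ι → ℝ) :
    ‖Complex.exp (Complex.I * complexDot t w)‖ * ‖complexDot t‖ ≤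
      2 * Fintype.card ι / δ * Real.exp (δ * ‖t‖ - (fun i => (z i).im) ⬝ᵥ t) := by
  set n : ℝ := (Fintype.card ι : ℝ)
  have hdist : n * ‖w - z‖ ≤ δ / 2 := by
    rw [mem_ball_iff_norm, lt_div_iff₀ (by positivity)] at hw
    nlinarith [norm_nonneg (w - z)]
  have hsub : ‖Complex.exp (Complex.I * complexDot t (w - z))‖ ≤ Real.exp (δ / 2 * ‖t‖) := by
    rw [Complex.norm_exp, Real.exp_le_exp]
    calc (Complex.I * complexDot t (w - z)).re ≤ ‖complexDot t (w - z)‖ := by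
          simpa using Complex.re_le_norm (Complex.I * complexDot t (w - z))
      _ ≤ n * ‖t‖ * ‖w - z‖ := (complexDot t).le_of_opNorm_le (norm_complexDot_le t) _
      _ = n * ‖w - z‖ * ‖t‖ := by ring
      _ ≤ δ / 2 * ‖t‖ := by gcongr
  have hnorm : ‖complexDot t‖ ≤ n * (2 / δ * Real.exp (δ / 2 * ‖t‖)) := by
    refine (norm_complexDot_le t).trans ?_
    gcongr
    simpa [div_div_eq_mul_div] using pow_mul_exp_le (half_pos hδ) 1 (norm_nonneg t)
  rw [← add_sub_cancel z w, map_add, mul_add, Complex.exp_add, norm_mul,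
    norm_cexp_I_mul_complexDot]
  calc _ ≤ Real.exp (-((fun i => (z i).im) ⬝ᵥ t)) * Real.exp (δ / 2 * ‖t‖) *
        (n * (2 / δ * Real.exp (δ / 2 * ‖t‖))) := by gcongr
    _ = 2 * n / δ * (Real.exp (δ / 2 * ‖t‖) * Real.exp (δ / 2 * ‖t‖) *
        Real.exp (-((fun i => (z i).im) ⬝ᵥ t))) := by ring
    _ = _ := by rw [← Real.exp_add, ← Real.exp_add]; ring_nf

theorem norm_fderiv_mul_cexp_le {δ : ℝ} (hδ : 0 < δ) (a : ℂ) {z w : ι → ℂ}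
    (hw : w ∈ Metric.ball z (δ / (2 * (Fintype.card ι + 1)))) (t : ι → ℝ) :
    ‖(a * (Complex.exp (Complex.I * complexDot t w) * Complex.I)) • complexDot t‖ ≤
      2 * Fintype.card ι / δ * (‖a‖ * Real.exp (δ * ‖t‖ - (fun i => (z i).im) ⬝ᵥ t)) := by
  have := mul_le_mul_of_nonneg_left (norm_complexDot_mul_cexp_le hδ hw t) (norm_nonneg a)
  simp only [norm_smul, norm_mul, Complex.norm_I, mul_one]
  linarith

theorem aestronglyMeasurable_fderiv_mul_cexp (hf : AEStronglyMeasurable f μ) (z : ι → ℂ) :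
    AEStronglyMeasurable (fun t =>
      (f t * (Complex.exp (Complex.I * complexDot t z) * Complex.I)) • complexDot t) μ :=
  (hf.mul (Continuous.aestronglyMeasurable (by fun_prop))).smul
    continuous_complexDot.aestronglyMeasurable

theorem integrable_fderiv_mul_cexp {z : ι → ℂ} (hz : z ∈ tube (interior (expDomain μ f))) :
    Integrable (fun t =>
      (f t * (Complex.exp (Complex.I * complexDot t z) * Complex.I)) • complexDot t) μ := by
  obtain ⟨δ, hδ, hint⟩ := exists_integrable_exp_mul_norm hz
  have hf := aestronglyMeasurable_of_mem_expDomain (interior_subset hz)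
  exact (hint.const_mul _).mono' (aestronglyMeasurable_fderiv_mul_cexp hf z) (.of_forall fun t =>
    norm_fderiv_mul_cexp_le hδ (f t) (Metric.mem_ball_self (by positivity)) t)

theorem hasFDerivAt_fourierLaplace {z : ι → ℂ} (hz : z ∈ tube (interior (expDomain μ f))) :
    HasFDerivAt (fourierLaplace μ f)
      (∫ t, (f t * (Complex.exp (Complex.I * complexDot t z) * Complex.I)) • complexDot t ∂μ)
      z := by
  obtain ⟨δ, hδ, hint⟩ := exists_integrable_exp_mul_norm hz
  have hz' : z ∈ tube (expDomain μ f) := interior_subset (s := expDomain μ f) hz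
  have hf := aestronglyMeasurable_of_mem_expDomain hz'
  refine hasFDerivAt_integral_of_dominated_of_fderiv_le
    (Metric.ball_mem_nhds z (show 0 < δ / (2 * (Fintype.card ι + 1)) by positivity))
    (.of_forall (aestronglyMeasurable_mul_cexp hf)) (integrable_mul_cexp hz')
    (aestronglyMeasurable_fderiv_mul_cexp hf z)
    (.of_forall fun t w hw => norm_fderiv_mul_cexp_le hδ (f t) hw t) (hint.const_mul _)
    (.of_forall fun t w _ => ?_)
  simpa only [smul_smul] using
    ((complexDot t).hasFDerivAt.const_mul Complex.I).cexp.const_mul (f t)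

theorem differentiableOn_fourierLaplace :
    DifferentiableOn ℂ (fourierLaplace μ f) (tube (interior (expDomain μ f))) :=
  fun _ hz => (hasFDerivAt_fourierLaplace hz).differentiableAt.differentiableWithinAt

theorem fderiv_fourierLaplace {z : ι → ℂ} (hz : z ∈ tube (interior (expDomain μ f)))
    (v : ι → ℂ) :
    fderiv ℂ (fourierLaplace μ f) z v =
      fourierLaplace μ (fun t => Complex.I * complexDot t v * f t) z := by
  rw [(hasFDerivAt_fourierLaplace hz).fderiv,
    ContinuousLinearMap.integral_apply (integrable_fderiv_mul_cexp hz)]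
  refine integral_congr_ae (.of_forall fun t => ?_)
  simp only [smul_apply, smul_eq_mul]
  ring

end FourierLaplace

section BoxOperator

variable {μ : Measure (Fin 3 → ℝ)} {f : (Fin 3 → ℝ) → ℂ}

theorem pd_congr {F G : (Fin 3 → ℂ) → ℂ} {U : Set (Fin 3 → ℂ)} (hU : IsOpen U)
    (h : EqOn F G U) (i : Fin 3) : EqOn (pd i F) (pd i G) U := fun z hz => by
  rw [pd, pd, (h.eventuallyEq_of_mem (hU.mem_nhds hz)).fderiv_eq]

theorem BoxS_congr {F G : (Fin 3 → ℂ) → ℂ} {U : Set (Fin 3 → ℂ)} (hU : IsOpen U)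
    (h : EqOn F G U) : EqOn (BoxS F) (BoxS G) U := fun z hz => by
  simp only [BoxS, pd_congr hU (pd_congr hU h _) _ hz]

theorem pd_fourierLaplace (i : Fin 3) :
    EqOn (pd i (fourierLaplace μ f)) (fourierLaplace μ fun t => Complex.I * t i * f t)
      (tube (interior (expDomain μ f))) := fun z hz => by
  simp only [pd, fderiv_fourierLaplace hz, complexDot_single]

/-- The quadratic form `4 t₁ t₂ - t₃²` by which `□` acts under the Fourier–Laplace transform;
in 0-based coordinates. -/
def boxSymbol (t : Fin 3 → ℝ) : ℝ :=
  4 * t 0 * t 1 - t 2 ^ 2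

@[fun_prop]
theorem continuous_boxSymbol : Continuous boxSymbol := by
  unfold boxSymbol
  fun_prop

theorem abs_boxSymbol_le (t : Fin 3 → ℝ) : |boxSymbol t| ≤ 5 * ‖t‖ ^ 2 := by
  have hcoord (i : Fin 3) : |t i| ≤ ‖t‖ := norm_le_pi_norm t i
  have h01 : |t 0| * |t 1| ≤ ‖t‖ * ‖t‖ := by gcongr <;> exact hcoord _
  have h22 : |t 2| ^ 2 ≤ ‖t‖ ^ 2 := by gcongr; exact hcoord 2
  calc |boxSymbol t| ≤ |4 * t 0 * t 1| + |t 2 ^ 2| := abs_sub _ _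
    _ = 4 * (|t 0| * |t 1|) + |t 2| ^ 2 := by simp [abs_mul, mul_assoc]
    _ ≤ 5 * ‖t‖ ^ 2 := by linarith

theorem interior_expDomain_subset_coord_mul (i : Fin 3) :
    interior (expDomain μ f) ⊆ interior (expDomain μ fun t => Complex.I * t i * f t) :=
  interior_expDomain_subset_mul (C := 1) (k := 1) (by fun_prop) fun t => by
    simpa using norm_le_pi_norm t i

theorem pd_pd_fourierLaplace (i j : Fin 3) :
    EqOn (pd i (pd j (fourierLaplace μ f)))
      (fourierLaplace μ fun t => Complex.I * t i * (Complex.I * t j * f t))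
      (tube (interior (expDomain μ f))) :=
  (pd_congr (isOpen_tube isOpen_interior) (pd_fourierLaplace j) i).trans fun _ hz =>
    pd_fourierLaplace i (interior_expDomain_subset_coord_mul j hz)

theorem BoxS_fourierLaplace :
    EqOn (BoxS (fourierLaplace μ f)) (fourierLaplace μ fun t => boxSymbol t * f t)
      (tube (interior (expDomain μ f))) := fun z hz => by
  have hint (i j : Fin 3) := integrable_mul_cexp (z := z) <|
    interior_subset (s := expDomain μ _) <|
      interior_expDomain_subset_coord_mul i (interior_expDomain_subset_coord_mul j hz)
  rw [BoxS, pd_pd_fourierLaplace 0 1 hz, pd_pd_fourierLaplace 2 2 hz]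
  simp only [fourierLaplace]
  rw [← integral_const_mul, ← integral_add ((hint 0 1).const_mul _) (hint 2 2)]
  refine integral_congr_ae (.of_forall fun t => ?_)
  simp only [boxSymbol]
  push_cast
  linear_combination (-(4 * (t 0 : ℂ) * t 1 - (t 2 : ℂ) ^ 2) * f t) *
    Complex.exp (Complex.I * complexDot t z) * Complex.I_sq

theorem interior_expDomain_subset_boxSymbol_pow_mul (m : ℕ) :
    interior (expDomain μ f) ⊆ interior (expDomain μ fun t => (boxSymbol t : ℂ) ^ m * f t) :=
  interior_expDomain_subset_mul (C := 5 ^ m) (k := 2 * m) (by fun_prop) fun t => by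
    rw [norm_pow, Complex.norm_real, pow_mul, ← mul_pow]
    gcongr
    exact abs_boxSymbol_le t

theorem BoxS_iterate_fourierLaplace (m : ℕ) :
    EqOn (BoxS^[m] (fourierLaplace μ f)) (fourierLaplace μ fun t => (boxSymbol t : ℂ) ^ m * f t)
      (tube (interior (expDomain μ f))) := by
  induction m with
  | zero => simp [EqOn]
  | succ m ih =>
    rw [Function.iterate_succ_apply']
    refine (BoxS_congr (isOpen_tube isOpen_interior) ih).trans fun z hz => ?_
    simpa only [← mul_assoc, ← pow_succ'] using
      BoxS_fourierLaplace (interior_expDomain_subset_boxSymbol_pow_mul m hz)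

end BoxOperator

section HardyNorm

open Filter Topology FourierTransform

variable {ι : Type*} [Fintype ι]

theorem lintegral_comp_smul {E : Type*} [NormedAddCommGroup E] [NormedSpace ℝ E]
    [FiniteDimensional ℝ E] [MeasurableSpace E] [BorelSpace E] (μ : Measure E)
    [μ.IsAddHaarMeasure] (f : E → ℝ≥0∞) {r : ℝ} (hr : r ≠ 0) :
    ∫⁻ x, f (r • x) ∂μ = ENNReal.ofReal |(r ^ Module.finrank ℝ E)⁻¹| * ∫⁻ x, f x ∂μ := by
  rw [← smul_eq_mul, ← lintegral_smul_measure, ← Measure.map_addHaar_smul μ hr]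
  exact ((Homeomorph.smulOfNeZero r hr).measurableEmbedding.lintegral_map f).symm

theorem fourierLaplace_ofReal_eq_fourier (h : (ι → ℝ) → ℂ) (x : ι → ℝ) :
    fourierLaplace volume h (fun i => (x i : ℂ)) =
      𝓕 (fun v : EuclideanSpace ℝ ι => h v.ofLp) (WithLp.toLp 2 (-(2 * Real.pi)⁻¹ • x)) := by
  rw [Real.fourier_eq', fourierLaplace,
    ← (PiLp.volume_preserving_ofLp ι).integral_comp
      (MeasurableEquiv.toLp 2 (ι → ℝ)).symm.measurableEmbedding]
  refine integral_congr_ae (.of_forall fun v => ?_)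
  have hinner : -2 * Real.pi * inner ℝ v (WithLp.toLp 2 (-(2 * Real.pi)⁻¹ • x)) =
      ∑ i, v.ofLp i * x i := by
    simp only [PiLp.inner_apply, RCLike.inner_apply, conj_trivial, Pi.smul_apply, smul_eq_mul,
      Finset.mul_sum]
    refine Finset.sum_congr rfl fun i _ => ?_
    field_simp
  simp only [smul_eq_mul]
  rw [hinner, complexDot_apply, mul_comm, mul_comm Complex.I]
  push_cast
  rfl

theorem lintegral_enorm_fourierLaplace_ofReal_sq {h : (ι → ℝ) → ℂ} (h1 : Integrable h)
    (h2 : MemLp h 2) :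
    ∫⁻ x : ι → ℝ, ‖fourierLaplace volume h (fun i => (x i : ℂ))‖ₑ ^ 2 =
      ENNReal.ofReal ((2 * Real.pi) ^ Fintype.card ι) * ∫⁻ t, ‖h t‖ₑ ^ 2 := by
  have hmp := PiLp.volume_preserving_ofLp ι
  have hemb : MeasurableEmbedding (WithLp.ofLp : EuclideanSpace ℝ ι → ι → ℝ) :=
    (MeasurableEquiv.toLp 2 (ι → ℝ)).symm.measurableEmbedding
  set φ : EuclideanSpace ℝ ι → ℂ := fun v => h v.ofLp
  have hφ : eLpNorm (𝓕 φ) 2 volume = eLpNorm φ 2 volume :=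
    eLpNorm_fourier_eq ((hmp.integrable_comp_emb hemb).2 h1) (h2.comp_measurePreserving hmp)
  have hscale : |((-(2 * Real.pi)⁻¹) ^ Module.finrank ℝ (ι → ℝ))⁻¹| =
      (2 * Real.pi) ^ Fintype.card ι := by
    rw [Module.finrank_fintype_fun_eq_card, abs_inv, abs_pow, abs_neg, abs_inv, inv_pow, inv_inv,
      abs_of_pos Real.two_pi_pos]
  calc ∫⁻ x : ι → ℝ, ‖fourierLaplace volume h (fun i => (x i : ℂ))‖ₑ ^ 2
      = ENNReal.ofReal ((2 * Real.pi) ^ Fintype.card ι) *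
          ∫⁻ x : ι → ℝ, ‖𝓕 φ (WithLp.toLp 2 x)‖ₑ ^ 2 := by
        simp only [fourierLaplace_ofReal_eq_fourier]
        rw [lintegral_comp_smul volume (fun x => ‖𝓕 φ (WithLp.toLp 2 x)‖ₑ ^ 2)
          (neg_ne_zero.2 (by positivity)), hscale]
    _ = ENNReal.ofReal ((2 * Real.pi) ^ Fintype.card ι) * ∫⁻ v, ‖φ v‖ₑ ^ 2 := by
        rw [← hmp.lintegral_comp_emb hemb, lintegral_enorm_sq_eq φ, ← hφ,
          ← lintegral_enorm_sq_eq]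
    _ = _ := by rw [hmp.lintegral_comp_emb hemb fun t => ‖h t‖ₑ ^ 2]

variable {Ω S : Set (ι → ℝ)} {f : (ι → ℝ) → ℂ}

theorem fourierLaplace_add_mul_I_eq (hS : MeasurableSet S) (f : (ι → ℝ) → ℂ) (x y : ι → ℝ) :
    fourierLaplace (volume.restrict S) f (fun i => (x i : ℂ) + (y i : ℂ) * Complex.I) =
      fourierLaplace volume (S.indicator fun t => f t * Real.exp (-(y ⬝ᵥ t)))
        fun i => (x i : ℂ) := by
  rw [fourierLaplace, fourierLaplace, ← integral_indicator hS]
  congr 1 with t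
  by_cases ht : t ∈ S
  swap; · simp only [indicator_of_notMem ht, zero_mul]
  simp only [indicator_of_mem ht]
  rw [mul_assoc, Complex.ofReal_exp, ← Complex.exp_add]
  congr 2
  simp only [complexDot_apply, dotProduct, Complex.ofReal_neg, Complex.ofReal_sum,
    Complex.ofReal_mul, Finset.mul_sum, ← Finset.sum_neg_distrib, ← Finset.sum_add_distrib]
  refine Finset.sum_congr rfl fun i _ => ?_
  linear_combination (t i : ℂ) * y i * Complex.I_sq

theorem norm_mul_exp_neg_le {y t : ι → ℝ} (h : 0 ≤ y ⬝ᵥ t) (a : ℂ) :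
    ‖a * Real.exp (-(y ⬝ᵥ t))‖ ≤ ‖a‖ := by
  rw [norm_mul, Complex.norm_real, Real.norm_eq_abs, Real.abs_exp]
  exact mul_le_of_le_one_right (norm_nonneg a) (Real.exp_le_one_iff.2 (neg_nonpos.2 h))

theorem lintegral_enorm_fourierLaplace_add_mul_I_sq (hS : MeasurableSet S)
    (hf : MemLp f 2 (volume.restrict S)) {y : ι → ℝ} (hy : y ∈ expDomain (volume.restrict S) f)
    (hpos : ∀ t ∈ S, 0 ≤ y ⬝ᵥ t) :
    ∫⁻ x : ι → ℝ, ‖fourierLaplace (volume.restrict S) f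
        (fun i => (x i : ℂ) + (y i : ℂ) * Complex.I)‖ₑ ^ 2 =
      ENNReal.ofReal ((2 * Real.pi) ^ Fintype.card ι) *
        ∫⁻ t in S, ‖f t * Real.exp (-(y ⬝ᵥ t))‖ₑ ^ 2 := by
  have hmem : MemLp (fun t => f t * Real.exp (-(y ⬝ᵥ t))) 2 (volume.restrict S) :=
    hf.mono hy.aestronglyMeasurable <| (ae_restrict_mem hS).mono fun t ht =>
      norm_mul_exp_neg_le (hpos t ht) (f t)
  simp only [fourierLaplace_add_mul_I_eq hS]
  rw [lintegral_enorm_fourierLaplace_ofReal_sq ((integrable_indicator_iff hS).2 hy)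
    ((memLp_indicator_iff_restrict hS).2 hmem)]
  simp only [lintegral_enorm_sq_eq, eLpNorm_indicator_eq_eLpNorm_restrict hS]

theorem iSup_lintegral_enorm_mul_exp_neg_sq (hS : MeasurableSet S)
    (hf : AEStronglyMeasurable f (volume.restrict S)) (hΩ : 0 ∈ closure Ω)
    (hpos : ∀ y ∈ Ω, ∀ t ∈ S, 0 ≤ y ⬝ᵥ t) :
    ⨆ y ∈ Ω, ∫⁻ t in S, ‖f t * Real.exp (-(y ⬝ᵥ t))‖ₑ ^ 2 = ∫⁻ t in S, ‖f t‖ₑ ^ 2 := by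
  refine le_antisymm (iSup₂_le fun y hy => setLIntegral_mono' hS fun t ht => ?_) ?_
  · gcongr
    exact enorm_le_iff_norm_le.2 (norm_mul_exp_neg_le (hpos y hy t ht) (f t))
  obtain ⟨y, hy, hlim⟩ := mem_closure_iff_seq_limit.1 hΩ
  have hpt (t : ι → ℝ) : Tendsto (fun n => ‖f t * Real.exp (-(y n ⬝ᵥ t))‖ₑ ^ 2) atTop
      (𝓝 (‖f t‖ₑ ^ 2)) := by
    have hcont : Continuous fun y : ι → ℝ => ‖f t * Real.exp (-(y ⬝ᵥ t))‖ₑ ^ 2 := by fun_prop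
    simpa [Function.comp_def] using (hcont.tendsto 0).comp hlim
  calc ∫⁻ t in S, ‖f t‖ₑ ^ 2
      = ∫⁻ t in S, liminf (fun n => ‖f t * Real.exp (-(y n ⬝ᵥ t))‖ₑ ^ 2) atTop := by
        simp only [(hpt _).liminf_eq]
    _ ≤ liminf (fun n => ∫⁻ t in S, ‖f t * Real.exp (-(y n ⬝ᵥ t))‖ₑ ^ 2) atTop :=
        lintegral_liminf_le' fun n =>
          ((hf.mul (Continuous.aestronglyMeasurable (by fun_prop))).enorm.pow_const 2)
    _ ≤ _ := liminf_le_of_le (by isBoundedDefault) fun b hb => by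
        obtain ⟨n, hn⟩ := hb.exists
        exact hn.trans (le_iSup₂_of_le (y n) (hy n) le_rfl)

theorem iSup_lintegral_enorm_fourierLaplace_sq (hS : MeasurableSet S)
    (hf : MemLp f 2 (volume.restrict S)) (hΩ : 0 ∈ closure Ω)
    (hsub : Ω ⊆ expDomain (volume.restrict S) f) (hpos : ∀ y ∈ Ω, ∀ t ∈ S, 0 ≤ y ⬝ᵥ t) :
    ⨆ y ∈ Ω, ∫⁻ x : ι → ℝ, ‖fourierLaplace (volume.restrict S) f
        (fun i => (x i : ℂ) + (y i : ℂ) * Complex.I)‖ₑ ^ 2 =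
      ENNReal.ofReal ((2 * Real.pi) ^ Fintype.card ι) * ∫⁻ t in S, ‖f t‖ₑ ^ 2 := by
  rw [← iSup_lintegral_enorm_mul_exp_neg_sq hS hf.1 hΩ hpos]
  simp only [ENNReal.mul_iSup]
  exact biSup_congr fun y hy =>
    lintegral_enorm_fourierLaplace_add_mul_I_sq hS hf (hsub hy) (hpos y hy)

end HardyNorm

section DualCone

variable {ι : Type*} [Fintype ι] {Ω S : Set (ι → ℝ)}

theorem integrable_exp_neg_mul_norm {E : Type*} [NormedAddCommGroup E] [NormedSpace ℝ E]
    [FiniteDimensional ℝ E] [MeasurableSpace E] [BorelSpace E] (μ : Measure E)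
    [μ.IsAddHaarMeasure] {δ : ℝ} (hδ : 0 < δ) :
    Integrable (fun x => Real.exp (-(δ * ‖x‖))) μ := by
  set k := Module.finrank ℝ E + 1
  have hdecay : Integrable (fun x : E => (1 + ‖x‖) ^ (-(k : ℝ))) μ :=
    integrable_one_add_norm (by simp [k])
  refine (hdecay.const_mul (k.factorial / δ ^ k * Real.exp δ)).mono'
    (Continuous.aestronglyMeasurable (by fun_prop)) (.of_forall fun x => ?_)
  have hx : 0 < 1 + ‖x‖ := by positivity
  rw [Real.norm_eq_abs, Real.abs_exp, Real.rpow_neg hx.le, Real.rpow_natCast, ← div_eq_mul_inv,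
    le_div_iff₀ (by positivity), Real.exp_neg, inv_mul_le_iff₀ (Real.exp_pos _)]
  calc (1 + ‖x‖) ^ k ≤ k.factorial / δ ^ k * Real.exp (δ * (1 + ‖x‖)) := pow_mul_exp_le hδ k hx.le
    _ = Real.exp (δ * ‖x‖) * (k.factorial / δ ^ k * Real.exp δ) := by
      rw [mul_add, mul_one, Real.exp_add]
      ring

theorem memLp_exp_neg_mul_norm {E : Type*} [NormedAddCommGroup E] [NormedSpace ℝ E]
    [FiniteDimensional ℝ E] [MeasurableSpace E] [BorelSpace E] (μ : Measure E)
    [μ.IsAddHaarMeasure] {δ : ℝ} (hδ : 0 < δ) (p : ℝ≥0∞) :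
    MemLp (fun x => Real.exp (-(δ * ‖x‖))) p μ := by
  have hmeas : AEStronglyMeasurable (fun x : E => Real.exp (-(δ * ‖x‖))) μ :=
    Continuous.aestronglyMeasurable (by fun_prop)
  rcases eq_or_ne p 0 with rfl | hp₀
  · exact memLp_zero_iff_aestronglyMeasurable.2 hmeas
  rcases eq_or_ne p ⊤ with rfl | hp
  · refine memLp_top_of_bound hmeas 1 (.of_forall fun x => ?_)
    rw [Real.norm_eq_abs, Real.abs_exp, Real.exp_le_one_iff, neg_nonpos]
    positivity
  · refine (integrable_norm_rpow_iff hmeas hp₀ hp).1 ?_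
    have := integrable_exp_neg_mul_norm μ (mul_pos hδ (ENNReal.toReal_pos hp₀ hp))
    refine this.congr (.of_forall fun x => ?_)
    simp only [Real.norm_eq_abs, Real.abs_exp, ← Real.exp_mul]
    ring_nf

theorem exists_mul_norm_le_dotProduct (hΩ : IsOpen Ω) {y : ι → ℝ} (hy : y ∈ Ω) :
    ∃ δ > 0, ∀ t : ι → ℝ, (∀ y' ∈ Ω, 0 ≤ y' ⬝ᵥ t) → δ * ‖t‖ ≤ y ⬝ᵥ t := by
  classical
  obtain ⟨δ, hδ, hball⟩ := Metric.nhds_basis_closedBall.mem_iff.1 (hΩ.mem_nhds hy)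
  refine ⟨δ, hδ, fun t ht => ?_⟩
  rw [← le_div_iff₀' hδ, pi_norm_le_iff_of_nonneg (div_nonneg (ht y hy) hδ.le)]
  intro i
  have hshift (a : ℝ) (ha : |a| = δ) : 0 ≤ y ⬝ᵥ t + a * t i := by
    have hmem := ht (y + Pi.single i a) (hball (by simp [Pi.norm_single, ha]))
    rwa [add_dotProduct, single_dotProduct] at hmem
  have hadd := hshift δ (abs_of_pos hδ)
  have hsub := hshift (-δ) (by rw [abs_neg, abs_of_pos hδ])
  have habs : δ * |t i| = |δ * t i| := by rw [abs_mul, abs_of_pos hδ]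
  rw [le_div_iff₀' hδ, Real.norm_eq_abs, habs, abs_le]
  constructor <;> linarith

theorem subset_expDomain_of_memLp (hΩ : IsOpen Ω) (hS : MeasurableSet S)
    (hpos : ∀ y ∈ Ω, ∀ t ∈ S, 0 ≤ y ⬝ᵥ t) {p q : ℝ≥0∞} [p.HolderTriple q 1] {f : (ι → ℝ) → ℂ}
    (hf : MemLp f p (volume.restrict S)) : Ω ⊆ expDomain (volume.restrict S) f := fun y hy => by
  obtain ⟨δ, hδ, hmargin⟩ := exists_mul_norm_le_dotProduct hΩ hy
  have hexp : MemLp (fun t => (Real.exp (-(y ⬝ᵥ t)) : ℂ)) q (volume.restrict S) := by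
    refine (memLp_exp_neg_mul_norm volume hδ q).restrict S |>.mono
      (Continuous.aestronglyMeasurable (by fun_prop)) ((ae_restrict_mem hS).mono fun t ht => ?_)
    rw [Complex.norm_real, Real.norm_eq_abs, Real.abs_exp, Real.norm_eq_abs, Real.abs_exp,
      Real.exp_le_exp, neg_le_neg_iff]
    exact hmargin t fun y' hy' => hpos y' hy' t ht
  exact hf.integrable_mul hexp

theorem isOpen_Sigma3 : IsOpen Sigma3 := by
  have hdet : IsOpen {y : Fin 3 → ℝ | 0 < y 0 * y 1 - y 2 ^ 2} :=
    isOpen_lt (by fun_prop) (by fun_prop)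
  have hpos : IsOpen {y : Fin 3 → ℝ | 0 < y 0} := isOpen_lt (by fun_prop) (by fun_prop)
  exact hdet.inter hpos

theorem zero_mem_closure_Sigma3 : (0 : Fin 3 → ℝ) ∈ closure Sigma3 := by
  have hcont : Continuous fun ε : ℝ => ![ε, ε, 0] := by fun_prop
  have hmaps : MapsTo (fun ε : ℝ => ![ε, ε, 0]) (Ioi 0) Sigma3 := fun ε (hε : 0 < ε) =>
    ⟨by simpa using mul_pos hε hε, hε⟩
  have hzero : (![0, 0, 0] : Fin 3 → ℝ) = 0 := by simp
  exact hzero ▸ hmaps.closure hcont (x := 0) (by simp)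

/-- The open dual cone of `Sigma3`, the support of the spectra of functions in `H²(T_Σ)`. -/
def dualCone : Set (Fin 3 → ℝ) :=
  {t | 0 < boxSymbol t ∧ 0 < t 0}

theorem measurableSet_dualCone : MeasurableSet dualCone := by
  have hpos : IsOpen {t : Fin 3 → ℝ | 0 < t 0} := isOpen_lt (by fun_prop) (by fun_prop)
  exact ((isOpen_lt continuous_const continuous_boxSymbol).inter hpos).measurableSet

theorem dotProduct_nonneg_of_mem_Sigma3 {y : Fin 3 → ℝ} (hy : y ∈ Sigma3) {t : Fin 3 → ℝ}
    (ht : t ∈ dualCone) : 0 ≤ y ⬝ᵥ t := by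
  obtain ⟨hy, hy0⟩ := hy
  obtain ⟨ht, ht0⟩ := ht
  rw [boxSymbol] at ht
  have hy1 : 0 < y 1 := by nlinarith [sq_nonneg (y 2)]
  have ht1 : 0 < t 1 := by nlinarith [sq_nonneg (t 2)]
  have hcross : |y 2 * t 2| ≤ y 0 * t 0 + y 1 * t 1 := by
    refine abs_le_of_sq_le_sq ?_ (by positivity)
    calc (y 2 * t 2) ^ 2 = y 2 ^ 2 * t 2 ^ 2 := mul_pow _ _ _
      _ ≤ (y 0 * y 1) * (4 * t 0 * t 1) := by gcongr <;> linarith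
      _ ≤ (y 0 * t 0 + y 1 * t 1) ^ 2 := by linarith [sq_nonneg (y 0 * t 0 - y 1 * t 1)]
  have := neg_le_of_abs_le hcross
  rw [dotProduct, Fin.sum_univ_three]
  linarith

theorem Sigma3_subset_interior_expDomain {p q : ℝ≥0∞} [p.HolderTriple q 1]
    {f : (Fin 3 → ℝ) → ℂ} (hf : MemLp f p (volume.restrict dualCone)) :
    Sigma3 ⊆ interior (expDomain (volume.restrict dualCone) f) :=
  interior_maximal (subset_expDomain_of_memLp (q := q) isOpen_Sigma3 measurableSet_dualCone
    (fun _ hy _ ht => dotProduct_nonneg_of_mem_Sigma3 hy ht) hf) isOpen_Sigma3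

theorem hardyNormSqSigma_fourierLaplace (f : Lp ℂ 2 (volume.restrict dualCone)) :
    hardyNormSqSigma (fourierLaplace (volume.restrict dualCone) f) =
      ENNReal.ofReal ((2 * Real.pi) ^ 3 * ‖f‖ ^ 2) := by
  have hf := Lp.memLp f
  have hnorm := ofReal_norm_toLp_sq hf
  rw [Lp.toLp_coeFn] at hnorm
  rw [ENNReal.ofReal_mul (by positivity), hnorm]
  exact iSup_lintegral_enorm_fourierLaplace_sq measurableSet_dualCone hf zero_mem_closure_Sigma3
    ((Sigma3_subset_interior_expDomain (q := 2) hf).trans interior_subset)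
    fun _ hy _ ht => dotProduct_nonneg_of_mem_Sigma3 hy ht

end DualCone

section ConeIntegral

theorem mem_dualCone_iff {v : Fin 2 → ℝ} {x : ℝ} :
    ![v 0, v 1, x] ∈ dualCone ↔
      v ∈ univ.pi (fun _ => Ioi 0) ∧ x ∈ Ioo (-√(4 * v 0 * v 1)) √(4 * v 0 * v 1) := by
  have hdisc : 0 < boxSymbol ![v 0, v 1, x] ↔ x ∈ Ioo (-√(4 * v 0 * v 1)) √(4 * v 0 * v 1) := by
    rw [mem_Ioo, ← abs_lt, Real.lt_sqrt (abs_nonneg x), sq_abs]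
    exact sub_pos
  have hpos (h : 0 < boxSymbol ![v 0, v 1, x]) (h0 : 0 < v 0) : 0 < v 1 := by
    have h' : 0 < 4 * v 0 * v 1 - x ^ 2 := h
    nlinarith [sq_nonneg x]
  simp only [mem_univ_pi, Fin.forall_fin_two, mem_Ioi, ← hdisc]
  exact ⟨fun ⟨hbox, h0⟩ => ⟨⟨h0, hpos hbox h0⟩, hbox⟩, fun ⟨⟨h0, _⟩, hbox⟩ => ⟨hbox, h0⟩⟩

theorem setIntegral_dualCone {E : Type*} [NormedAddCommGroup E] [NormedSpace ℝ E]
    {g : (Fin 3 → ℝ) → E} (hg : IntegrableOn g dualCone) :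
    ∫ t in dualCone, g t = ∫ v in univ.pi fun _ : Fin 2 => Ioi (0 : ℝ),
      ∫ x in -√(4 * v 0 * v 1)..√(4 * v 0 * v 1), g ![v 0, v 1, x] := by
  have hmp := (volume_preserving_piFinSuccAbove (fun _ : Fin 3 => ℝ) 2).symm
  set e := MeasurableEquiv.piFinSuccAbove (fun _ : Fin 3 => ℝ) 2
  have he (x : ℝ) (v : Fin 2 → ℝ) : e.symm (x, v) = ![v 0, v 1, x] := by
    ext i
    fin_cases i <;> rfl
  have hind (x : ℝ) (v : Fin 2 → ℝ) : dualCone.indicator g (e.symm (x, v)) =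
      (univ.pi fun _ => Ioi 0).indicator (fun v =>
        (Ioo (-√(4 * v 0 * v 1)) √(4 * v 0 * v 1)).indicator (fun x => g ![v 0, v 1, x]) x) v := by
    classical
    simp only [he, indicator_apply, mem_dualCone_iff, ite_and]
  have hint : Integrable (fun q => dualCone.indicator g (e.symm q)) (volume.prod volume) :=
    (hmp.integrable_comp_emb e.symm.measurableEmbedding).2
      ((integrable_indicator_iff measurableSet_dualCone).2 hg)
  rw [← integral_indicator measurableSet_dualCone, ← hmp.integral_comp',
    Measure.volume_eq_prod, integral_prod_symm _ hint,
    ← integral_indicator (.univ_pi fun _ => measurableSet_Ioi)]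
  congr 1 with v
  by_cases hv : v ∈ univ.pi fun _ => Ioi (0 : ℝ)
  · rw [indicator_of_mem hv, intervalIntegral.integral_of_le
      (neg_le_self (Real.sqrt_nonneg _)), integral_Ioc_eq_integral_Ioo,
      ← integral_indicator measurableSet_Ioo]
    simp only [hind, indicator_of_mem hv]
  · simp only [hind, indicator_of_notMem hv, integral_zero]

/-- The constant `4^{n+1/2} Γ(n+3/2)² ∫_{-1}^1 (1-x²)^n dx` in the Laplace transform of
`boxSymbol ^ n` over the dual cone. -/
def boxGamma (n : ℕ) : ℝ :=
  4 ^ (n + 1 / 2 : ℝ) * Real.Gamma (n + 3 / 2) ^ 2 * ∫ x in (-1 : ℝ)..1, (1 - x ^ 2) ^ n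

theorem boxGamma_pos (n : ℕ) : 0 < boxGamma n := by
  have := Real.Gamma_pos_of_pos (by positivity : (0 : ℝ) < n + 3 / 2)
  have := intervalIntegral_one_sub_sq_pow_pos n
  unfold boxGamma
  positivity

theorem intervalIntegral_boxSymbol_pow (n : ℕ) {v : Fin 2 → ℝ}
    (hv : v ∈ univ.pi fun _ => Ioi (0 : ℝ)) :
    ∫ x in -√(4 * v 0 * v 1)..√(4 * v 0 * v 1), boxSymbol ![v 0, v 1, x] ^ n =
      4 ^ (n + 1 / 2 : ℝ) * (∏ i, v i ^ (n + 1 / 2 : ℝ)) * ∫ x in (-1)..1, (1 - x ^ 2) ^ n := by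
  have h0 : 0 < v 0 := hv 0 trivial
  have h1 : 0 < v 1 := hv 1 trivial
  refine (intervalIntegral_sqrt_sub_sq_pow n (by positivity)).trans ?_
  rw [mul_assoc, Real.mul_rpow (by positivity) (by positivity), Real.mul_rpow h0.le h1.le,
    Fin.prod_univ_two]

theorem mem_TSigma_of_mem_UHP {p : ℂ × ℂ} (hp : p ∈ UHP ×ˢ UHP) : ![p.1, p.2, 0] ∈ TSigma :=
  ⟨by simpa using mul_pos hp.1 hp.2, hp.1⟩

theorem Sigma3_subset_interior_expDomain_boxSymbol_pow (n : ℕ) :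
    Sigma3 ⊆ interior (expDomain (volume.restrict dualCone) fun t => (boxSymbol t : ℂ) ^ n) := by
  have hone : MemLp (fun _ : Fin 3 → ℝ => (1 : ℂ)) ⊤ (volume.restrict dualCone) :=
    memLp_top_const 1
  simpa only [mul_one] using (Sigma3_subset_interior_expDomain (q := 1) hone).trans
    (interior_expDomain_subset_boxSymbol_pow_mul n)

theorem setIntegral_pi_Ioi_prod_rpow_mul_cexp {ι : Type*} [Fintype ι] {s : ℝ} (hs : 0 < s)
    {w : ι → ℂ} (hw : ∀ i, 0 < (w i).re) :
    ∫ v in univ.pi fun _ => Ioi (0 : ℝ),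
        ∏ i, ((v i ^ (s - 1) : ℝ) : ℂ) * Complex.exp (-(w i * v i)) =
      ∏ i, Real.Gamma s * w i ^ (-(s : ℂ)) := by
  rw [volume_pi, Measure.restrict_pi_pi, integral_fintype_prod_eq_prod fun i (t : ℝ) =>
    ((t ^ (s - 1) : ℝ) : ℂ) * Complex.exp (-(w i * t))]
  exact Finset.prod_congr rfl fun i _ => integral_rpow_mul_cexp_neg_mul_Ioi hs (hw i)

theorem cexp_I_mul_complexDot_cons (v : Fin 2 → ℝ) (x : ℝ) (p : ℂ × ℂ) :
    Complex.exp (Complex.I * complexDot ![v 0, v 1, x] ![p.1, p.2, 0]) =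
      ∏ i, Complex.exp (-(![-Complex.I * p.1, -Complex.I * p.2] i * v i)) := by
  rw [← Complex.exp_sum, complexDot_apply, Fin.sum_univ_three, Fin.sum_univ_two]
  congr 1
  simp only [Matrix.cons_val]
  ring

theorem fourierLaplace_boxSymbol_pow (n : ℕ) {p : ℂ × ℂ} (hp : p ∈ UHP ×ˢ UHP) :
    fourierLaplace (volume.restrict dualCone) (fun t => (boxSymbol t : ℂ) ^ n) ![p.1, p.2, 0] =
      boxGamma n * ((-Complex.I * p.1) ^ (-((n + 3 / 2 : ℝ) : ℂ)) *
        (-Complex.I * p.2) ^ (-((n + 3 / 2 : ℝ) : ℂ))) := by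
  let w : Fin 2 → ℂ := ![-Complex.I * p.1, -Complex.I * p.2]
  have hw (i : Fin 2) : 0 < (w i).re := by
    fin_cases i
    exacts [re_neg_I_mul_pos hp.1, re_neg_I_mul_pos hp.2]
  let c : ℝ := 4 ^ (n + 1 / 2 : ℝ) * ∫ x in (-1 : ℝ)..1, (1 - x ^ 2) ^ n
  have hs : (n + 3 / 2 : ℝ) - 1 = n + 1 / 2 := by ring
  have hinner {v : Fin 2 → ℝ} (hv : v ∈ univ.pi fun _ => Ioi (0 : ℝ)) :
      ∫ x in -√(4 * v 0 * v 1)..√(4 * v 0 * v 1), (boxSymbol ![v 0, v 1, x] : ℂ) ^ n *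
        Complex.exp (Complex.I * complexDot ![v 0, v 1, x] ![p.1, p.2, 0]) =
      c * ∏ i, ((v i ^ ((n + 3 / 2 : ℝ) - 1) : ℝ) : ℂ) * Complex.exp (-(w i * v i)) := by
    simp only [cexp_I_mul_complexDot_cons, intervalIntegral.integral_mul_const,
      ← Complex.ofReal_pow, intervalIntegral.integral_ofReal, intervalIntegral_boxSymbol_pow n hv,
      hs]
    push_cast [c, Finset.prod_mul_distrib]
    ring
  have hint := integrable_mul_cexp (interior_subset (s := expDomain _ _)
    (Sigma3_subset_interior_expDomain_boxSymbol_pow n (mem_TSigma_of_mem_UHP hp)))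
  rw [fourierLaplace, setIntegral_dualCone hint,
    setIntegral_congr_fun (.univ_pi fun _ => measurableSet_Ioi) fun v hv => hinner hv,
    integral_const_mul, setIntegral_pi_Ioi_prod_rpow_mul_cexp (by positivity) hw,
    Fin.prod_univ_two, boxGamma]
  simp only [c, w, Matrix.cons_val, Complex.ofReal_mul, Complex.ofReal_pow]
  ring

end ConeIntegral

section ConeExponential

variable {m : ℕ} {p q : ℂ × ℂ}

/-- The spectral side of the functional `F ↦ (□^m F)(p.1, p.2, 0)`: if `F` is the Fourier–Laplace
transform of `f`, the value of the functional is the inner product of `coneExp m p` with `f`. -/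
def coneExp (m : ℕ) (p : ℂ × ℂ) (t : Fin 3 → ℝ) : ℂ :=
  (boxSymbol t : ℂ) ^ m * conj (Complex.exp (Complex.I * complexDot t ![p.1, p.2, 0]))

theorem continuous_coneExp (m : ℕ) (p : ℂ × ℂ) : Continuous (coneExp m p) := by
  unfold coneExp
  fun_prop

theorem conj_coneExp (m : ℕ) (p : ℂ × ℂ) (t : Fin 3 → ℝ) :
    conj (coneExp m p t) =
      (boxSymbol t : ℂ) ^ m * Complex.exp (Complex.I * complexDot t ![p.1, p.2, 0]) := by
  rw [coneExp, map_mul, map_pow, Complex.conj_ofReal, Complex.conj_conj]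

theorem coneExp_mul_conj_coneExp (m : ℕ) (p q : ℂ × ℂ) (t : Fin 3 → ℝ) :
    coneExp m q t * conj (coneExp m p t) = (boxSymbol t : ℂ) ^ (2 * m) *
      Complex.exp (Complex.I * complexDot t ![(p - conj q).1, (p - conj q).2, 0]) := by
  have hexp : Complex.exp (Complex.I * complexDot t ![(p - conj q).1, (p - conj q).2, 0]) =
      conj (Complex.exp (Complex.I * complexDot t ![q.1, q.2, 0])) *
        Complex.exp (Complex.I * complexDot t ![p.1, p.2, 0]) := by
    have hfst : (conj q).1 = conj q.1 := rfl
    have hsnd : (conj q).2 = conj q.2 := rfl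
    rw [← Complex.exp_conj, ← Complex.exp_add]
    congr 1
    simp only [complexDot_apply, Fin.sum_univ_three, Matrix.cons_val, Prod.fst_sub, Prod.snd_sub,
      hfst, hsnd, mul_zero, add_zero, map_mul, map_add, Complex.conj_I, Complex.conj_ofReal]
    ring
  rw [conj_coneExp, coneExp, hexp]
  ring

theorem sub_conj_mem_UHP_prod (hp : p ∈ UHP ×ˢ UHP) (hq : q ∈ UHP ×ˢ UHP) :
    p - conj q ∈ UHP ×ˢ UHP :=
  ⟨sub_conj_mem_UHP hq.1 hp.1, sub_conj_mem_UHP hq.2 hp.2⟩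

theorem memLp_coneExp (m : ℕ) (hp : p ∈ UHP ×ˢ UHP) :
    MemLp (coneExp m p) 2 (volume.restrict dualCone) := by
  refine (memLp_two_iff_integrable_sq_norm (continuous_coneExp m p).aestronglyMeasurable).2 ?_
  have hint := integrable_mul_cexp (interior_subset (s := expDomain _ _)
    (Sigma3_subset_interior_expDomain_boxSymbol_pow (2 * m)
      (mem_TSigma_of_mem_UHP (sub_conj_mem_UHP_prod hp hp))))
  refine hint.norm.congr (.of_forall fun t => ?_)
  simp only [← coneExp_mul_conj_coneExp, norm_mul, RCLike.norm_conj, sq]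

/-- `coneExp m q` as an element of `L²` of the dual cone. -/
def coneExpLp (m : ℕ) (q : (UHP ×ˢ UHP : Set (ℂ × ℂ))) : Lp ℂ 2 (volume.restrict dualCone) :=
  (memLp_coneExp m q.2).toLp _

theorem inner_coneExpLp (m : ℕ) (q : (UHP ×ˢ UHP : Set (ℂ × ℂ)))
    (f : Lp ℂ 2 (volume.restrict dualCone)) :
    inner ℂ (coneExpLp m q) f = fourierLaplace (volume.restrict dualCone)
      (fun t => (boxSymbol t : ℂ) ^ m * f t) ![q.1.1, q.1.2, 0] := by
  conv_lhs => rw [coneExpLp, ← Lp.toLp_coeFn f (Lp.memLp f), inner_toLp_toLp]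
  refine integral_congr_ae (.of_forall fun t => ?_)
  simp only [conj_coneExp]
  ring

/-- The ratio of the Gram matrices of `coneExpLp m` and of the Bergman kernels of weight
`2m - 1/2`. -/
def gramRatio (m : ℕ) : ℝ :=
  boxGamma (2 * m) / ((2 * m - 1 / 2 + 1) * 2 ^ (2 * m - 1 / 2 : ℝ) / Real.pi) ^ 2

theorem neg_one_lt_two_mul_sub_half (m : ℕ) : (-1 : ℝ) < 2 * m - 1 / 2 := by
  linarith [m.cast_nonneg (α := ℝ)]

theorem gramRatio_pos (m : ℕ) : 0 < gramRatio m := by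
  have := boxGamma_pos (2 * m)
  have : (0 : ℝ) < 2 * m - 1 / 2 + 1 := by linarith [neg_one_lt_two_mul_sub_half m]
  unfold gramRatio
  positivity

theorem fourierLaplace_boxSymbol_pow_sub_conj (hp : p ∈ UHP ×ˢ UHP) (hq : q ∈ UHP ×ˢ UHP) :
    fourierLaplace (volume.restrict dualCone) (fun t => (boxSymbol t : ℂ) ^ (2 * m))
        ![(p - conj q).1, (p - conj q).2, 0] =
      gramRatio m * bergmanKernelProd (2 * m - 1 / 2) (2 * m - 1 / 2) q p := by
  have hα : (2 * m - 1 / 2 + 1 : ℝ) ≠ 0 := by linarith [neg_one_lt_two_mul_sub_half m]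
  set c : ℝ := (2 * m - 1 / 2 + 1) * 2 ^ (2 * m - 1 / 2 : ℝ) / Real.pi with hc
  have hc0 : (c : ℂ) ≠ 0 := by
    exact_mod_cast (by positivity : c ≠ 0)
  have hs : ((2 * m : ℕ) : ℝ) + 3 / 2 = 2 * m - 1 / 2 + 2 := by
    push_cast
    ring
  rw [fourierLaplace_boxSymbol_pow _ (sub_conj_mem_UHP_prod hp hq), hs, gramRatio, ← hc,
    bergmanKernelProd, bergmanKernel, bergmanKernel, ← hc]
  push_cast
  field_simp
  rfl

theorem inner_coneExpLp_coneExpLp (m : ℕ) (p q : (UHP ×ˢ UHP : Set (ℂ × ℂ))) :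
    inner ℂ (coneExpLp m p) (coneExpLp m q) = gramRatio m *
      inner ℂ (bergmanKernelLp (neg_one_lt_two_mul_sub_half m) (neg_one_lt_two_mul_sub_half m) p)
        (bergmanKernelLp (neg_one_lt_two_mul_sub_half m) (neg_one_lt_two_mul_sub_half m) q) := by
  have hα := neg_one_lt_two_mul_sub_half m
  conv_rhs => rw [bergmanKernelLp.eq_def hα hα q, inner_bergmanKernelLp_toLp hα hα p
    (differentiableOn_bergmanKernelProd _ _ q.2)]
  rw [← fourierLaplace_boxSymbol_pow_sub_conj p.2 q.2, coneExpLp, coneExpLp, inner_toLp_toLp]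
  simp only [coneExp_mul_conj_coneExp, fourierLaplace]

end ConeExponential

/-- there is `c_m > 0` such that every `G ∈ A²_{(2m−1/2,2m−1/2)}(Π⁺×Π⁺)`
is of the form `G(z₁,z₂) = (□^m F)(z₁,z₂,0)` for some `F ∈ H²(T_Σ)` with
`‖F‖²_{H²(T_Σ)} = c_m ‖G‖²`. -/
theorem extension_from_bergman_prod_to_hardy (m : ℕ) :
    ∃ c : ℝ, 0 < c ∧
      ∀ G : ℂ × ℂ → ℂ, DifferentiableOn ℂ G (UHP ×ˢ UHP) →
        bergNormSqProd (2 * m - 1 / 2) (2 * m - 1 / 2) G < ⊤ →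
        ∃ F : (Fin 3 → ℂ) → ℂ, DifferentiableOn ℂ F TSigma ∧ hardyNormSqSigma F < ⊤ ∧
          (∀ p ∈ UHP ×ˢ UHP, BoxS^[m] F ![(p : ℂ × ℂ).1, p.2, 0] = G p) ∧
          hardyNormSqSigma F =
            ENNReal.ofReal c * bergNormSqProd (2 * m - 1 / 2) (2 * m - 1 / 2) G := by
  have hα := neg_one_lt_two_mul_sub_half m
  have hκ := gramRatio_pos m
  refine ⟨(2 * Real.pi) ^ 3 * (gramRatio m)⁻¹, by positivity, fun G hG hfin => ?_⟩
  have hG₂ := memLp_of_bergNormSqProd_lt_top hG hfin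
  obtain ⟨f, hnorm, hinner⟩ := exists_inner_eq_of_gram_eq_const_mul hκ
    (inner_coneExpLp_coneExpLp m) (toLp_mem_topologicalClosure_span_bergmanKernelLp hα hα hG hG₂)
  have hdom : Sigma3 ⊆ interior (expDomain (volume.restrict dualCone) f) :=
    Sigma3_subset_interior_expDomain (q := 2) (Lp.memLp f)
  have hF : hardyNormSqSigma (fourierLaplace (volume.restrict dualCone) f) =
      ENNReal.ofReal ((2 * Real.pi) ^ 3 * (gramRatio m)⁻¹) *
        bergNormSqProd (2 * m - 1 / 2) (2 * m - 1 / 2) G := by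
    rw [hardyNormSqSigma_fourierLaplace, hnorm, ← mul_assoc, ENNReal.ofReal_mul (by positivity),
      ofReal_norm_toLp_sq]
    rfl
  refine ⟨_, differentiableOn_fourierLaplace.mono fun z hz => hdom hz,
    hF ▸ ENNReal.mul_lt_top ENNReal.ofReal_lt_top hfin, fun p hp => ?_, hF⟩
  rw [BoxS_iterate_fourierLaplace m (hdom (mem_TSigma_of_mem_UHP hp))]
  exact (inner_coneExpLp m ⟨p, hp⟩ f).symm.trans
    ((hinner ⟨p, hp⟩).trans (inner_bergmanKernelLp_toLp hα hα ⟨p, hp⟩ hG hG₂))
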